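/- The Rees algebra R(I(K_V^t)) = ⊕_{j≥0} I(K_V^t)^j t^j of the edge ideal of a complete t-spread d-partite hypergraph is a normal Cohen-Macaulay domain. -/

import Mathlib

/-!
The edges of `K_V^t` contained in a given vertex set are closed under componentwise minima and two
of them may be spliced at a layer. Hence a discrete max-flow-min-cut property holds
(`exists_edge_sub`): a vector `a` all of whose transversal sums are at least `k` is the sum of `k`
edges and a vector of `ℕ^n`. So the Rees algebra is the monoid algebra `K[M]` (`reesEquiv`) of the
monoid `M` of all `(a, k)` with `k ≤ a(C)` for every transversal `C`, and `M` is finitely generated.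
Recording the coordinates of `(a, k)` and the slacks `a(C) - k` embeds `M` into some `ℕ^τ` as a
*full* submonoid (`reesEmb_isFullEmb`), one that contains all its differences lying in `ℕ^τ`.
The polynomial ring `K[ℕ^τ]` then retracts `K[M]`-linearly onto `K[M]`.

Being a subring of a polynomial ring, `K[M]` is a domain, and the retraction makes it integrally
closed (`isIntegrallyClosed_of_full`). For the Cohen–Macaulay property it suffices
(`isCohenMacaulayRing_of_finite_flat`) that `K[M]` be finite and flat over a polynomial ring
(`exists_genMap_finite_flat`), which is a form of Hochster's theorem proved by reduction modulo `p`: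

* Over `𝔽_p`, let `A → R = K[M]` be a Noether normalization and `S` the polynomial ring containing
  `R` as a retract. Some `c ≠ 0` in `A` trivializes every linear relation in `R` over `A`. The
  relations obtained by raising a given relation to the power `q = p ^ e` are trivialized by `c`;
  since `A` and `S` are free over their `q`-th powers this shows that `c` lies in the `q`-th power
  of the ideal of those `d ∈ S` trivializing the given relation in `S`. As `e` is arbitrary, Krull's
  intersection theorem shows that this ideal is the unit ideal, and the retraction brings the
  trivialization back to `R` (`flat_of_frobSplit`).
* Other fields of characteristic `p` follow by base change from `𝔽_p`.
* In characteristic `0`, choose the normalization over `ℚ` with integral coefficients. It is finite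
  over `ℤ[1/N]` and its reductions are flat for all primes not dividing a suitable `N`
  (`exists_forall_prime_flat`). By the local criterion of flatness it is flat over
  `ℤ[1/N]` (`flat_away`), hence over every field of characteristic `0`.
-/

open MvPolynomial

noncomputable section

/-- `e : Fin d → Fin n` encodes a `𝐭`-spread edge. -/
def IsSpreadEdge (n d : ℕ) (V : Fin d → Finset (Fin n)) (t : ℕ → ℕ) (e : Fin d → Fin n) :
    Prop :=
  (∀ j, e j ∈ V j) ∧
    ∀ (j : ℕ) (h : j + 1 < d),
      (e ⟨j, Nat.lt_of_succ_lt h⟩ : ℕ) + t j ≤ (e ⟨j + 1, h⟩ : ℕ)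

/-- The set of minimal monomial generators `G(I(K_V^𝐭))`. -/
def spreadGens (K : Type) [Field K] (n d : ℕ) (V : Fin d → Finset (Fin n)) (t : ℕ → ℕ) :
    Set (MvPolynomial (Fin n) K) :=
  {m | ∃ e : Fin d → Fin n, IsSpreadEdge n d V t e ∧ m = ∏ j, X (e j)}

/-- The edge ideal `I(K_V^𝐭)`. -/
def edgeIdeal (K : Type) [Field K] (n d : ℕ) (V : Fin d → Finset (Fin n)) (t : ℕ → ℕ) :
    Ideal (MvPolynomial (Fin n) K) :=
  Ideal.span (spreadGens K n d V t)

/-- The depth `grade(J, M)` of a module `M` along an ideal `J`. -/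
def idealDepth (R : Type) [CommRing R] (J : Ideal R) (M : Type) [AddCommGroup M]
    [Module R M] : ℕ :=
  sSup {k | ∃ rs : List R, rs.length = k ∧ (∀ x ∈ rs, x ∈ J) ∧
    RingTheory.Sequence.IsRegular M rs}

/-- A (Noetherian) ring is Cohen–Macaulay if for every maximal ideal `p`, the depth of `R`
along `p` equals the Krull dimension of the localization `R_p`. -/
def IsCohenMacaulayRing (R : Type) [CommRing R] : Prop :=
  ∀ (p : Ideal R) (hp : p.IsMaximal),
    letI := hp.isPrime
    ((idealDepth R p R : ℕ∞) : WithBot ℕ∞) = ringKrullDim (Localization.AtPrime p)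

/-! ### Relations trivialized by a scalar -/

/-- `KillsRel A M c` says that multiplying by `c` makes every `A`-linear relation
`∑ aᵢ mᵢ = 0` in `M` trivial; for `c = 1` this is the equational criterion of flatness. -/
def KillsRel (A : Type*) [CommRing A] (M : Type*) [AddCommGroup M] [Module A M] (c : A) : Prop :=
  ∀ (l : ℕ) (a : Fin l → A) (r : Fin l → M), ∑ i, a i • r i = 0 →
    Module.IsTrivialRelation a (fun i => c • r i)

/-- A finite module over a domain contains a free submodule with torsion quotient, and an element
`c` annihilating that quotient makes all relations trivial. -/
theorem KillsRel.exists_ne_zero (A : Type*) [CommRing A] [IsDomain A] (M : Type*) [AddCommGroup M]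
    [Module A M] [Module.Finite A M] : ∃ c : A, c ≠ 0 ∧ KillsRel A M c := by
  classical
  obtain ⟨n, s, hs⟩ := Module.Finite.exists_fin (R := A) (M := M)
  obtain ⟨I, hI, hmax⟩ := exists_maximal_linearIndepOn A s
  set F : Submodule A M := Submodule.span A (s '' I) with hF
  have hex : ∀ i, ∃ a : A, a ≠ 0 ∧ a • s i ∈ F := by
    intro i
    by_cases hi : i ∈ I
    · exact ⟨1, one_ne_zero, by
        rw [one_smul]; exact Submodule.subset_span (Set.mem_image_of_mem _ hi)⟩
    · exact hmax i hi
  choose b hb hbF using hex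
  have hfree : Module.Free A F := by
    have hI' : LinearIndependent A (fun i : I => s i) := hI
    have e : F = Submodule.span A (Set.range (fun i : I => s i)) := by
      rw [hF, Set.image_eq_range]
    rw [e]
    exact Module.Free.of_basis (Module.Basis.span hI')
  have hcF : ∀ m : M, (∏ i, b i) • m ∈ F := by
    intro m
    have hm : m ∈ Submodule.span A (Set.range s) := hs ▸ Submodule.mem_top
    induction hm using Submodule.span_induction with
    | mem x hx =>
      obtain ⟨i, rfl⟩ := hx
      rw [← Finset.prod_erase_mul _ _ (Finset.mem_univ i), mul_smul]
      exact F.smul_mem _ (hbF i)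
    | zero => simp
    | add x y _ _ hx hy => rw [smul_add]; exact F.add_mem hx hy
    | smul a x _ hx => rw [smul_comm]; exact F.smul_mem _ hx
  refine ⟨∏ i, b i, Finset.prod_ne_zero_iff.mpr fun i _ => hb i, fun l a r h => ?_⟩
  have h0 : ∑ i, a i • (⟨(∏ i, b i) • r i, hcF (r i)⟩ : F) = 0 := by
    apply Subtype.ext
    simp only [Submodule.coe_sum, Submodule.coe_smul, Submodule.coe_zero]
    simp_rw [smul_comm (a _)]
    rw [← Finset.smul_sum, h, smul_zero]
  obtain ⟨k, w, y, hy, hw⟩ := Module.Flat.isTrivialRelation_of_sum_smul_eq_zero h0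
  refine ⟨k, w, fun j => y j, fun i => ?_, hw⟩
  have := congrArg Subtype.val (hy i)
  simpa using this

/-- The property `KillsRel` passes to the quotient by an element `π` of the base ring: a relation
modulo `π` lifts to a relation with the additional coefficient `-π`. -/
theorem KillsRel.quotient {A A' R R' : Type*} [CommRing A] [CommRing A'] [CommRing R] [CommRing R']
    [Algebra A R] [Algebra A' R'] (φ : A →+* A') (ψ : R →+* R')
    (hφ : Function.Surjective φ) (hψ : Function.Surjective ψ)
    (hc : ∀ a, ψ (algebraMap A R a) = algebraMap A' R' (φ a)) (π : A) (hπ : φ π = 0)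
    (hker : ∀ r, ψ r = 0 → ∃ r', r = π • r') {c : A} (h : KillsRel A R c) :
    KillsRel A' R' (φ c) := by
  have hsm : ∀ a r, ψ (a • r) = φ a • ψ r := by
    intro a r; rw [Algebra.smul_def, map_mul, hc, Algebra.smul_def]
  intro l a' r' h0
  choose a ha using fun i => hφ (a' i)
  choose r hr using fun i => hψ (r' i)
  obtain ⟨r0, hr0⟩ := hker (∑ i, a i • r i) (by
    rw [map_sum, ← h0]; simp [hsm, ha, hr])
  obtain ⟨k, w, y, hy, hw⟩ := h (l + 1) (Fin.cons (-π) a) (Fin.cons r0 r) (by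
    simp [Fin.sum_univ_succ, hr0])
  refine ⟨k, fun i j => φ (w i.succ j), fun j => ψ (y j), fun i => ?_, fun j => ?_⟩
  · have := congrArg ψ (hy i.succ)
    simpa [hsm, hr] using this
  · have := congrArg φ (hw j)
    simpa [Fin.sum_univ_succ, hπ, ha] using this

/-! ### A local criterion of flatness -/

section
open TensorProduct Pointwise

/-- Flatness transfers along a semilinear bijection over a ring isomorphism. -/
theorem flat_of_semilinear_bijective {A B M N : Type*} [CommRing A] [CommRing B] [AddCommGroup M]
    [AddCommGroup N] [Module A M] [Module B N] (e : A ≃+* B) (f : M ≃+ N)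
    (hf : ∀ a m, f (a • m) = e a • f m) (h : Module.Flat B N) : Module.Flat A M := by
  have hf' : ∀ b n, f.symm (b • n) = e.symm b • f.symm n := by
    intro b n; rw [AddEquiv.symm_apply_eq, hf]; simp
  refine Module.Flat.of_forall_isTrivialRelation fun {l a x} h0 => ?_
  obtain ⟨k, w, y, hy, hw⟩ := Module.Flat.isTrivialRelation_of_sum_smul_eq_zero
    (R := B) (f := fun i => e (a i)) (x := fun i => f (x i)) (by
      have := congrArg f h0
      simpa [hf] using this)
  refine ⟨k, fun i j => e.symm (w i j), fun j => f.symm (y j), fun i => ?_, fun j => ?_⟩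
  · have := congrArg f.symm (hy i)
    simpa [hf'] using this
  · have := congrArg e.symm (hw j)
    simpa using this

/-- Local criterion of flatness: flatness of a finite module over a Noetherian ring may be tested
modulo regular elements, provided every maximal ideal contains one of them. -/
theorem flat_of_flat_quotient {A : Type*} [CommRing A] [IsNoetherianRing A] {M : Type*}
    [AddCommGroup M] [Module A M] [Module.Finite A M]
    (h : ∀ P : Ideal A, P.IsMaximal → ∃ x ∈ P, IsSMulRegular M x ∧
      Module.Flat (A ⧸ Ideal.span {x}) ((A ⧸ Ideal.span {x}) ⊗[A] M)) :
    Module.Flat A M := by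
  refine Module.flat_of_isLocalized_maximal A M
    (fun P hP => Localization.AtPrime P ⊗[A] M)
    (fun P hP => TensorProduct.mk A (Localization.AtPrime P) M 1) fun P hP => ?_
  obtain ⟨x, hxP, hreg, hflat⟩ := h P hP
  let B := Localization.AtPrime P
  have : Module.Flat B (B ⊗[A] M) := by
    let y : B := algebraMap A B x
    have hy : y ∈ (⊥ : Ideal B).jacobson := by
      rw [IsLocalRing.jacobson_eq_maximalIdeal _ bot_ne_top]
      exact (IsLocalization.AtPrime.to_map_mem_maximal_iff B P x).mpr hxP
    have hyreg : IsSMulRegular (B ⊗[A] M) y := hreg.of_flat_of_isBaseChange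
      (TensorProduct.isBaseChange A M B)
    have : Module.FinitePresentation B (B ⊗[A] M) :=
      Module.finitePresentation_of_finite B _
    have hle : Ideal.span {x} ≤ (Ideal.span {y}).comap (algebraMap A B) := by
      rw [Ideal.span_le, Set.singleton_subset_iff]
      exact Ideal.subset_span rfl
    let C := B ⧸ Ideal.span {y}
    let _ : Algebra (A ⧸ Ideal.span {x}) C := (Ideal.quotientMap _ _ hle).toAlgebra
    have : IsScalarTower A (A ⧸ Ideal.span {x}) C := IsScalarTower.of_algebraMap_eq fun a => rfl
    have hC : Module.Flat C (C ⊗[A] M) :=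
      Module.Flat.of_linearEquiv
        (TensorProduct.AlgebraTensorModule.cancelBaseChange A (A ⧸ Ideal.span {x}) C C M).symm
    have hC2 : Module.Flat C (C ⊗[B] (B ⊗[A] M)) :=
      Module.Flat.of_linearEquiv
        (TensorProduct.AlgebraTensorModule.cancelBaseChange A B C C M)
    have hC3 : Module.Flat C (QuotSMulTop y (B ⊗[A] M)) :=
      Module.Flat.of_linearEquiv
        ((QuotSMulTop.equivQuotTensor y (B ⊗[A] M)).extendScalarsOfSurjective
          Ideal.Quotient.mk_surjective)
    have : Module.Finite C (QuotSMulTop y (B ⊗[A] M)) :=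
      Module.Finite.of_restrictScalars_finite B _ _
    have : IsLocalRing C := by
      have : Nontrivial C := Ideal.Quotient.nontrivial_iff.mpr (by
        intro ht
        rw [Ideal.span_singleton_eq_top] at ht
        rw [IsLocalRing.jacobson_eq_maximalIdeal _ bot_ne_top] at hy
        exact hy ht)
      exact IsLocalRing.of_surjective' (Ideal.Quotient.mk _) Ideal.Quotient.mk_surjective
    have : Module.Free C (QuotSMulTop y (B ⊗[A] M)) := Module.free_of_flat_of_isLocalRing
    have := (Module.free_quotSMulTop_iff_free (R := B) (M := B ⊗[A] M) hy hyreg).mp this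
    infer_instance
  exact Module.Flat.trans A B _

/-- Version of `flat_of_flat_quotient` in which the quotients are presented by surjections. -/
theorem flat_of_flat_surjective {A R : Type*} [CommRing A] [IsNoetherianRing A] [CommRing R]
    [Algebra A R] [Module.Finite A R]
    (h : ∀ P : Ideal A, P.IsMaximal → ∃ x ∈ P, (∀ r : R, x • r = 0 → r = 0) ∧
      ∃ (A' R' : Type) (_ : CommRing A') (_ : CommRing R') (_ : Algebra A' R')
        (φ : A →+* A') (ψ : R →+* R'), Function.Surjective φ ∧ Function.Surjective ψ ∧
        (∀ a, ψ (algebraMap A R a) = algebraMap A' R' (φ a)) ∧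
        (∀ a, φ a = 0 ↔ ∃ a', a = x * a') ∧ (∀ r, ψ r = 0 ↔ ∃ r', r = x • r') ∧
        Module.Flat A' R') : Module.Flat A R := by
  refine flat_of_flat_quotient fun P hP => ?_
  obtain ⟨x, hx, hreg, A', R', _, _, _, φ, ψ, hφ, hψ, hc, hkφ, hkψ, hfl⟩ := h P hP
  refine ⟨x, hx, isSMulRegular_iff_right_eq_zero_of_smul.mpr hreg, ?_⟩
  have hsm : ∀ a r, ψ (a • r) = φ a • ψ r := by
    intro a r; rw [Algebra.smul_def, map_mul, hc, Algebra.smul_def]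
  have hker : RingHom.ker φ = Ideal.span {x} := by
    ext a
    rw [RingHom.mem_ker, hkφ, Ideal.mem_span_singleton]
    rfl
  let e : (A ⧸ Ideal.span {x}) ≃+* A' :=
    (Ideal.quotEquivOfEq hker.symm).trans (RingHom.quotientKerEquivOfSurjective hφ)
  have he : ∀ a, e (Ideal.Quotient.mk _ a) = φ a := fun a => rfl
  let N : Submodule A R := Ideal.span {x} • ⊤
  have hN : ∀ r, r ∈ N ↔ ψ r = 0 := by
    intro r
    rw [hkψ, show N = x • (⊤ : Submodule A R) from Submodule.ideal_span_singleton_smul x ⊤, Submodule.mem_smul_pointwise_iff_exists]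
    simp [eq_comm]
  let g0 : (R ⧸ N) →+ R' := QuotientAddGroup.lift N.toAddSubgroup ψ.toAddMonoidHom
    (fun r hr => (hN r).mp hr)
  have hg0 : Function.Bijective g0 := by
    constructor
    · rw [injective_iff_map_eq_zero]
      intro z hz
      obtain ⟨r, rfl⟩ := Submodule.Quotient.mk_surjective N z
      exact (Submodule.Quotient.mk_eq_zero N).mpr ((hN r).mpr hz)
    · intro r'
      obtain ⟨r, rfl⟩ := hψ r'
      exact ⟨Submodule.Quotient.mk r, rfl⟩
  have hg : ∀ (a : A) (z : R ⧸ N), g0 (a • z) = φ a • g0 z := by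
    intro a z
    obtain ⟨r, rfl⟩ := Submodule.Quotient.mk_surjective N z
    exact hsm a r
  let T := TensorProduct.quotTensorEquivQuotSMul R (Ideal.span {x})
  refine flat_of_semilinear_bijective e
    (T.toAddEquiv.trans (AddEquiv.ofBijective g0 hg0)) (fun a m => ?_) hfl
  obtain ⟨a, rfl⟩ := Ideal.Quotient.mk_surjective a
  have h1 : (Ideal.Quotient.mk (Ideal.span {x}) a) • m = a • m :=
    algebraMap_smul (A ⧸ Ideal.span {x}) a m
  rw [h1, he]
  change g0 (T (a • m)) = φ a • g0 (T m)
  rw [map_smul, hg]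

end

/-! ### Flatness from the Frobenius -/

/-- `FrobSplit A q` says that `A` is generated over its subset of `q`-th powers by a finite family
`e` with coordinates `κ` that are `q⁻¹`-linear: `κ l (s ^ q * v) = s * κ l v` and
`v = ∑ (κ l v) ^ q * e l`. -/
def FrobSplit (A : Type) [CommRing A] (q : ℕ) : Prop :=
  ∃ (Λ : Type) (_ : Fintype Λ) (e : Λ → A) (κ : Λ → A →+ A),
    (∀ l s v, κ l (s ^ q * v) = s * κ l v) ∧ ∀ v, v = ∑ l, κ l v ^ q * e l

section
open MvPolynomial

theorem expand_pow_zmod {τ : Type} (p : ℕ) [Fact p.Prime] (e : ℕ) (f : MvPolynomial τ (ZMod p)) :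
    expand (p ^ e) f = f ^ p ^ e := by
  induction e generalizing f with
  | zero => simp
  | succ e ih => rw [pow_succ, expand_mul, expand_zmod, ih, ← pow_mul, mul_comm]

/-- Over `𝔽_p`, the monomials with all exponents below `q` form a basis over the `q`-th powers. -/
theorem frobSplit_mvPolynomial (τ : Type) [Fintype τ] (p : ℕ) [Fact p.Prime] (e : ℕ) :
    FrobSplit (MvPolynomial τ (ZMod p)) (p ^ e) := by
  classical
  set q := p ^ e with hq
  have hq0 : 0 < q := pow_pos (Fact.out : p.Prime).pos e
  let em : (τ → Fin q) → (τ →₀ ℕ) := fun l => Finsupp.equivFunOnFinite.symm (fun i => (l i : ℕ))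
  let dv : (τ →₀ ℕ) → (τ →₀ ℕ) := fun m => m.mapRange (· / q) (Nat.zero_div q)
  let md : (τ →₀ ℕ) → (τ → Fin q) := fun m i => ⟨m i % q, Nat.mod_lt _ hq0⟩
  let κ : (τ → Fin q) → MvPolynomial τ (ZMod p) →ₗ[ZMod p] MvPolynomial τ (ZMod p) := fun l =>
    (basisMonomials τ (ZMod p)).constr (ZMod p)
      (fun m => if md m = l then monomial (dv m) 1 else 0)
  have hκ : ∀ l m a, κ l (monomial m a) = if md m = l then monomial (dv m) a else 0 := by
    intro l m a
    have : monomial m a = a • basisMonomials τ (ZMod p) m := by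
      simp [smul_monomial]
    rw [this, map_smul, Module.Basis.constr_basis]
    split_ifs <;> simp [smul_monomial]
  have hmd : ∀ m m', md (q • m + m') = md m' := by
    intro m m'; ext i; simp [md]
  have hdv : ∀ m m', dv (q • m + m') = m + dv m' := by
    intro m m'; ext i; simp [dv, Nat.mul_add_div hq0]
  have hrec : ∀ m, q • dv m + em (md m) = m := by
    intro m; ext i; simp [dv, em, md, Nat.div_add_mod]
  refine ⟨τ → Fin q, inferInstance, fun l => monomial (em l) 1, fun l => (κ l).toAddMonoidHom,
    fun l s v => ?_, fun v => ?_⟩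
  · change κ l (s ^ q * v) = s * κ l v
    rw [hq, ← expand_pow_zmod, ← hq]
    induction s using MvPolynomial.induction_on' with
    | add s s' h h' => rw [map_add, add_mul, map_add, h, h', add_mul]
    | monomial m a =>
      induction v using MvPolynomial.induction_on' with
      | add v v' h h' => rw [mul_add, map_add, h, h', map_add, mul_add]
      | monomial m' b =>
        rw [expand_monomial, monomial_mul, hκ, hκ, hmd, hdv]
        split_ifs <;> simp [monomial_mul]
  · change v = ∑ l, κ l v ^ q * monomial (em l) 1
    simp_rw [hq, ← expand_pow_zmod, ← hq]
    induction v using MvPolynomial.induction_on' with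
    | add v v' h h' =>
      simp_rw [map_add, add_mul, Finset.sum_add_distrib]
      rw [← h, ← h']
    | monomial m b =>
      rw [Finset.sum_eq_single (md m)]
      · rw [hκ, if_pos rfl, expand_monomial, monomial_mul, hrec, mul_one]
      · intro l _ hl
        rw [hκ, if_neg (Ne.symm hl), map_zero, zero_mul]
      · simp

end

/-- The Frobenius argument: a subring `R` of a domain `S`, split by an `R`-linear retraction `ρ`,
over a base `A`. If some `c ≠ 0` makes all relations trivial, so does `1`. Applying `q`-th powers
to a relation for `r`, and then the coordinates of `FrobSplit`, shows that `c` lies in the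
`q`-th power of the ideal of those `d` for which `d r` lies in the `S`-span of the syzygies, so that
this ideal is the unit ideal by Krull's intersection theorem. -/
theorem flat_of_frobSplit {A R S : Type} [CommRing A] [CommRing R] [CommRing S] [IsDomain S]
    [IsNoetherianRing S] [Algebra A R] (p : ℕ) [Fact p.Prime] [CharP R p]
    (hA : ∀ e, FrobSplit A (p ^ e)) (hS : ∀ e, FrobSplit S (p ^ e))
    (ι : R →+* S) (ρ : S →+ R) (hρ : ∀ r s, ρ (ι r * s) = r * ρ s) (hρ1 : ρ 1 = 1)
    (c : A) (hc : ι (algebraMap A R c) ≠ 0) (h : KillsRel A R c) : Module.Flat A R := by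
  classical
  refine Module.Flat.of_forall_isTrivialRelation fun {l a r} h0 => ?_
  let f : A →+* S := ι.comp (algebraMap A R)
  let W : Set (Fin l → S) := {v | ∃ b : Fin l → A, ∑ i, a i * b i = 0 ∧ v = fun i => f (b i)}
  let J : Ideal S := (Submodule.span S W).comap
    (LinearMap.toSpanSingleton S (Fin l → S) (fun i => ι (r i)))
  have hJ : ∀ d, d ∈ J ↔ (fun i => d * ι (r i)) ∈ Submodule.span S W := fun d => Iff.rfl
  have key : ∀ e, f c ∈ J ^ (p ^ e) := by
    intro e
    obtain ⟨Λ, _, eA, κ, hκ, hκe⟩ := hA e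
    obtain ⟨Λ', _, eS, μ, hμ, hμe⟩ := hS e
    have h1 : ∑ i, (a i ^ p ^ e) • (r i ^ p ^ e) = 0 := by
      have := congrArg (· ^ p ^ e) h0
      simp only [Algebra.smul_def] at this ⊢
      rw [sum_pow_char_pow, zero_pow (pow_pos (Fact.out : p.Prime).pos e).ne'] at this
      simpa [mul_pow] using this
    obtain ⟨k, w, t, ht, hw⟩ := h l _ _ h1
    have hsyz : ∀ j x, (fun i => f (κ x (w i j))) ∈ W := by
      intro j x
      refine ⟨fun i => κ x (w i j), ?_, rfl⟩
      have := congrArg (κ x) (hw j)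
      simpa [hκ] using this
    have h2 : ∀ i, ι (r i) ^ p ^ e * f c =
        ∑ j, ∑ x, (f (κ x (w i j))) ^ p ^ e * (f (eA x) * ι (t j)) := by
      intro i
      have := congrArg ι (ht i)
      simp only [Algebra.smul_def, map_mul, map_pow, map_sum] at this
      rw [mul_comm]
      refine this.trans (Finset.sum_congr rfl fun j _ => ?_)
      have h3 := congrArg f (hκe (w i j))
      simp only [map_sum, map_mul, map_pow] at h3
      change f (w i j) * _ = _
      rw [h3, Finset.sum_mul]
      exact Finset.sum_congr rfl fun x _ => by ring
    have h4 : ∀ y, μ y (f c) ∈ J := by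
      intro y
      rw [hJ]
      have : (fun i => μ y (f c) * ι (r i)) =
          ∑ j, ∑ x, μ y (f (eA x) * ι (t j)) • (fun i => f (κ x (w i j))) := by
        funext i
        have := congrArg (μ y) (h2 i)
        simp only [hμ, map_sum] at this
        rw [mul_comm, this]
        simp [mul_comm]
      rw [this]
      exact Submodule.sum_mem _ fun j _ => Submodule.sum_mem _ fun x _ =>
        Submodule.smul_mem _ _ (Submodule.subset_span (hsyz j x))
    rw [hμe (f c)]
    exact Ideal.sum_mem _ fun y _ => Ideal.mul_mem_right _ _ (Ideal.pow_mem_pow (h4 y) _)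
  have hJtop : (1 : S) ∈ J := by
    by_contra hne
    have hbot := Ideal.iInf_pow_eq_bot_of_isDomain (I := J)
      (fun ht => hne (ht ▸ Submodule.mem_top))
    have : f c ∈ (⨅ i : ℕ, J ^ i) := by
      rw [Submodule.mem_iInf]
      intro i
      exact Ideal.pow_le_pow_right (Nat.lt_pow_self (Fact.out : p.Prime).one_lt).le (key i)
    rw [hbot] at this
    exact hc this
  rw [hJ] at hJtop
  obtain ⟨k, s, v, hv⟩ := Submodule.mem_span_set'.mp hJtop
  choose b hb hvb using fun j => (v j).2
  refine ⟨k, fun i j => b j i, fun j => ρ (s j), fun i => ?_, hb⟩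
  have h5 := congrArg ρ (congrFun hv i)
  simp only [Finset.sum_apply, Pi.smul_apply, smul_eq_mul, map_sum, one_mul, hvb] at h5
  have h6 : ρ (ι (r i)) = r i := by simpa [hρ1] using hρ (r i) 1
  rw [h6] at h5
  rw [← h5]
  refine Finset.sum_congr rfl fun j _ => ?_
  rw [mul_comm, Algebra.smul_def]
  exact hρ _ _

/-! ### Full submonoids of `ℕ^τ` -/

/-- A *full* embedding of a commutative monoid into `ℕ^τ`: an injective homomorphism whose image
contains every difference of two of its elements that lies in `ℕ^τ`. -/
structure IsFullEmb {M τ : Type} [AddCommMonoid M] (Φ : M →+ (τ →₀ ℕ)) : Prop where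
  inj : Function.Injective Φ
  full : ∀ m m' w, Φ m + w = Φ m' → w ∈ Set.range Φ

section
variable {M τ : Type} [AddCommMonoid M] (D : Type) [CommRing D] (Φ : M →+ (τ →₀ ℕ))

/-- The map `D[M] → D[x_i : i ∈ τ]` induced by `Φ`. -/
def monEmb : AddMonoidAlgebra D M →+* MvPolynomial τ D :=
  AddMonoidAlgebra.mapDomainRingHom D Φ

theorem monEmb_single (m : M) (a : D) :
    monEmb D Φ (AddMonoidAlgebra.single m a) = monomial (Φ m) a := by
  simp only [monEmb, AddMonoidAlgebra.mapDomainRingHom_apply, AddMonoidAlgebra.mapDomain_single]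
  rfl

variable {Φ}

theorem monEmb_injective (hΦ : IsFullEmb Φ) : Function.Injective (monEmb D Φ) :=
  AddMonoidAlgebra.mapDomain_injective hΦ.inj

/-- The retraction of `monEmb` that forgets the monomials outside the image of `Φ`. -/
def monRetr (hΦ : IsFullEmb Φ) : MvPolynomial τ D →+ AddMonoidAlgebra D M :=
  AddMonoidAlgebra.comapDomainAddMonoidHom Φ hΦ.inj

theorem monRetr_monomial (hΦ : IsFullEmb Φ) (m : M) (a : D) :
    monRetr D hΦ (monomial (Φ m) a) = AddMonoidAlgebra.single m a :=
  AddMonoidAlgebra.comapDomain_single_map Φ hΦ.inj m a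

theorem monRetr_monomial_of_notMem (hΦ : IsFullEmb Φ) (w : τ →₀ ℕ) (hw : w ∉ Set.range Φ) (a : D) :
    monRetr D hΦ (monomial w a) = 0 := by
  change AddMonoidAlgebra.comapDomain Φ hΦ.inj (AddMonoidAlgebra.single w a) = 0
  ext m
  simp only [AddMonoidAlgebra.coeff_comapDomain, Finsupp.comapDomain_apply,
    AddMonoidAlgebra.coeff_single, AddMonoidAlgebra.coeff_zero, Finsupp.coe_zero, Pi.zero_apply]
  exact Finsupp.single_eq_of_ne fun h => hw ⟨m, h⟩

theorem monRetr_one (hΦ : IsFullEmb Φ) : monRetr D hΦ 1 = 1 := by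
  have := monRetr_monomial D hΦ 0 1
  rw [map_zero] at this
  exact this

/-- The retraction is `D[M]`-linear; this is where fullness enters. -/
theorem monRetr_mul (hΦ : IsFullEmb Φ) (r : AddMonoidAlgebra D M) (s : MvPolynomial τ D) :
    monRetr D hΦ (monEmb D Φ r * s) = r * monRetr D hΦ s := by
  induction r using AddMonoidAlgebra.induction_linear with
  | zero => simp
  | add x y hx hy => rw [map_add, add_mul, map_add, hx, hy, add_mul]
  | single m a =>
    induction s using MvPolynomial.induction_on' with
    | add s s' h h' => rw [mul_add, map_add, h, h', map_add, mul_add]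
    | monomial w b =>
      rw [monEmb_single, monomial_mul]
      by_cases hw : w ∈ Set.range Φ
      · obtain ⟨m', rfl⟩ := hw
        rw [← map_add, monRetr_monomial, monRetr_monomial, AddMonoidAlgebra.single_mul_single]
      · rw [monRetr_monomial_of_notMem D hΦ w hw, mul_zero, monRetr_monomial_of_notMem]
        rintro ⟨m', h⟩
        exact hw (hΦ.full m m' w h.symm)

theorem monRetr_monEmb (hΦ : IsFullEmb Φ) (r : AddMonoidAlgebra D M) :
    monRetr D hΦ (monEmb D Φ r) = r := by
  simpa [monRetr_one] using monRetr_mul D hΦ r 1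

theorem isDomain_of_full (hΦ : IsFullEmb Φ) [IsDomain D] : IsDomain (AddMonoidAlgebra D M) :=
  (monEmb_injective D hΦ).isDomain

/-- An element `u / v` integral over `D[M]` lies in the polynomial ring, and applying the
retraction shows that `v` divides `u` in `D[M]`. -/
theorem isIntegrallyClosed_of_full (K : Type) [Field K] (hΦ : IsFullEmb Φ) :
    IsIntegrallyClosed (AddMonoidAlgebra K M) := by
  have := isDomain_of_full K hΦ
  let R := AddMonoidAlgebra K M
  let S := MvPolynomial τ K
  rw [isIntegrallyClosed_iff (FractionRing R)]
  intro z hz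
  obtain ⟨u, v, hv, rfl⟩ := IsFractionRing.div_surjective (A := R) z
  have hv0 : v ≠ 0 := nonZeroDivisors.ne_zero hv
  let g : FractionRing R →+* FractionRing S :=
    IsFractionRing.map (K := FractionRing R) (L := FractionRing S) (monEmb_injective K hΦ)
  have hg : ∀ r : R, g (algebraMap R _ r) = algebraMap S _ (monEmb K Φ r) := fun r =>
    IsLocalization.map_eq _ r
  have hint : IsIntegral S (g (algebraMap R _ u / algebraMap R _ v)) := by
    obtain ⟨P, hP, hP0⟩ := hz
    refine ⟨P.map (monEmb K Φ), hP.map _, ?_⟩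
    rw [Polynomial.eval₂_map, ← map_zero g, ← hP0, Polynomial.hom_eval₂]
    congr 1
    exact RingHom.ext fun r => (hg r).symm
  obtain ⟨s, hs⟩ := IsIntegrallyClosed.isIntegral_iff.mp hint
  rw [map_div₀, hg, hg] at hs
  have hev0 : monEmb K Φ v ≠ 0 := fun h => hv0 (monEmb_injective K hΦ (by rw [h, map_zero]))
  have hs2 : monEmb K Φ v * s = monEmb K Φ u := by
    apply IsFractionRing.injective S (FractionRing S)
    rw [map_mul, hs]
    exact mul_div_cancel₀ _
      ((map_ne_zero_iff _ (IsFractionRing.injective S (FractionRing S))).mpr hev0)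
  have h3 := congrArg (monRetr K hΦ) hs2
  rw [monRetr_mul, monRetr_monEmb] at h3
  refine ⟨monRetr K hΦ s, ?_⟩
  rw [← h3, map_mul]
  rw [mul_div_cancel_left₀]
  exact (map_ne_zero_iff _ (IsFractionRing.injective R (FractionRing R))).mpr hv0

end

/-! ### Maps from polynomial rings to monoid algebras -/

section
open TensorProduct

section
variable {M : Type} [AddCommMonoid M] {s : ℕ}

/-- The `D`-algebra map `D[X_1, …, X_s] → D[M]` sending `X_i` to the image of `y_i ∈ ℤ[M]`. -/
def genMap (D : Type) [CommRing D] (y : Fin s → AddMonoidAlgebra ℤ M) :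
    MvPolynomial (Fin s) D →ₐ[D] AddMonoidAlgebra D M :=
  aeval fun i => AddMonoidAlgebra.mapRingHom M (Int.castRingHom D) (y i)

theorem genMap_map {D D' : Type} [CommRing D] [CommRing D'] (φ : D →+* D')
    (y : Fin s → AddMonoidAlgebra ℤ M) (f : MvPolynomial (Fin s) D) :
    AddMonoidAlgebra.mapRingHom M φ (genMap D y f) = genMap D' y (map φ f) := by
  have : (AddMonoidAlgebra.mapRingHom M φ).comp (genMap D y).toRingHom =
      (genMap D' y).toRingHom.comp (map φ) := by
    refine MvPolynomial.ringHom_ext (fun a => ?_) fun i => ?_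
    · simp [genMap, AddMonoidAlgebra.mapRingHom_single]
    · simp only [genMap, AlgHom.toRingHom_eq_coe, RingHom.comp_apply, RingHom.coe_coe, aeval_X,
        map_X]
      rw [← RingHom.comp_apply, ← AddMonoidAlgebra.mapRingHom_comp]
      congr 2
      exact RingHom.ext_int _ _
  exact congrArg (fun g : MvPolynomial (Fin s) D →+* _ => g f) this

/-- `genMap` over `D'` is the base change of `genMap` over `D`. -/
theorem genMap_baseChange (D D' : Type) [CommRing D] [CommRing D'] [Algebra D D']
    (y : Fin s → AddMonoidAlgebra ℤ M) :
    genMap D' y =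
      ((AddMonoidAlgebra.scalarTensorEquiv D D' : D' ⊗[D] AddMonoidAlgebra D M ≃ₐ[D'] _).toAlgHom.comp
        (Algebra.TensorProduct.lTensor (S := D') D' (genMap D y))).comp
        (algebraTensorAlgEquiv D D' : D' ⊗[D] MvPolynomial (Fin s) D ≃ₐ[D'] _).symm.toAlgHom := by
  refine MvPolynomial.algHom_ext fun i => ?_
  have h := genMap_map (algebraMap D D') y (X i)
  rw [map_X] at h
  rw [← h]
  have h2 : (algebraTensorAlgEquiv (σ := Fin s) D D').symm (X i) = 1 ⊗ₜ X i :=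
    algebraTensorAlgEquiv_symm_X D D' i
  have h3 : Algebra.TensorProduct.lTensor (S := D') D' (genMap D y) (1 ⊗ₜ X i) =
      1 ⊗ₜ genMap D y (X i) := Algebra.TensorProduct.map_tmul _ _ _ _
  change _ = (AddMonoidAlgebra.scalarTensorEquiv D D') ((Algebra.TensorProduct.lTensor (S := D') D'
    (genMap D y)) ((algebraTensorAlgEquiv (σ := Fin s) D D').symm (X i)))
  rw [h2, h3, AddMonoidAlgebra.scalarTensorEquiv_tmul, one_smul]
  rfl

theorem genMap_flat_baseChange (D D' : Type) [CommRing D] [CommRing D'] [Algebra D D']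
    (y : Fin s → AddMonoidAlgebra ℤ M) (h : (genMap D y).toRingHom.Flat) :
    (genMap D' y).toRingHom.Flat := by
  rw [genMap_baseChange D D' y]
  refine RingHom.Flat.comp (RingHom.Flat.of_bijective (AlgEquiv.bijective _)) ?_
  refine RingHom.Flat.comp ?_ (RingHom.Flat.of_bijective (AlgEquiv.bijective _))
  exact RingHom.Flat.lTensor (R := D) (S := D') (A := D') (f := genMap D y) h

end

end

/-! ### Finiteness, and flatness in characteristic `p` -/

section
open TensorProduct

section
variable {M : Type} [AddCommMonoid M] {s : ℕ}

theorem genMap_isIntegralElem_map {D D' : Type} [CommRing D] [CommRing D'] (φ : D →+* D')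
    (y : Fin s → AddMonoidAlgebra ℤ M) {r : AddMonoidAlgebra D M}
    (h : (genMap D y).toRingHom.IsIntegralElem r) :
    (genMap D' y).toRingHom.IsIntegralElem (AddMonoidAlgebra.mapRingHom M φ r) := by
  obtain ⟨P, hP, h0⟩ := h
  refine ⟨P.map (map φ), hP.map _, ?_⟩
  have h1 : (genMap D' y).toRingHom.comp (map φ) =
      (AddMonoidAlgebra.mapRingHom M φ).comp (genMap D y).toRingHom :=
    RingHom.ext fun f => (genMap_map φ y f).symm
  rw [Polynomial.eval₂_map, h1, ← Polynomial.hom_eval₂, h0, map_zero]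

/-- `genMap` is finite once the generators of the monoid are integral. -/
theorem genMap_finite {D : Type} [CommRing D] (y : Fin s → AddMonoidAlgebra ℤ M) (T : Finset M)
    (hT : AddSubmonoid.closure (T : Set M) = ⊤)
    (h : ∀ m ∈ T, (genMap D y).toRingHom.IsIntegralElem (AddMonoidAlgebra.single m 1)) :
    (genMap D y).toRingHom.Finite := by
  have : AddMonoid.FG M := ⟨⟨T, hT⟩⟩
  refine RingHom.IsIntegral.to_finite (fun r => ?_) ?_
  · have hm : ∀ m : M, (genMap D y).toRingHom.IsIntegralElem (AddMonoidAlgebra.single m 1) := by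
      intro m
      have : m ∈ AddSubmonoid.closure (T : Set M) := hT ▸ AddSubmonoid.mem_top m
      induction this using AddSubmonoid.closure_induction with
      | mem x hx => exact h x hx
      | zero => exact RingHom.isIntegralElem_one _
      | add a b _ _ ha hb =>
        have := RingHom.IsIntegralElem.mul _ ha hb
        rwa [AddMonoidAlgebra.single_mul_single, one_mul] at this
    induction r using AddMonoidAlgebra.induction_linear with
    | zero => exact RingHom.isIntegralElem_zero _
    | add a b ha hb => exact RingHom.IsIntegralElem.add _ ha hb
    | single m a =>
      have h1 : (genMap D y).toRingHom.IsIntegralElem ((genMap D y).toRingHom (C a)) :=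
        RingHom.isIntegralElem_map _
      have := RingHom.IsIntegralElem.mul _ h1 (hm m)
      convert this using 1
      simp [genMap, AddMonoidAlgebra.single_mul_single]
  · have : Algebra.FiniteType D (AddMonoidAlgebra D M) := inferInstance
    have h2 : (algebraMap D (AddMonoidAlgebra D M)).FiniteType :=
      RingHom.finiteType_algebraMap.mpr this
    refine RingHom.FiniteType.of_comp_finiteType (f := C) ?_
    convert h2
    exact (genMap D y).comp_algebraMap

theorem genMap_finite_map {D D' : Type} [CommRing D] [CommRing D'] (φ : D →+* D') [AddMonoid.FG M]
    (y : Fin s → AddMonoidAlgebra ℤ M) (h : (genMap D y).toRingHom.Finite) :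
    (genMap D' y).toRingHom.Finite := by
  obtain ⟨T, hT⟩ := AddMonoid.FG.fg_top (M := M)
  refine genMap_finite y T hT fun m _ => ?_
  have := genMap_isIntegralElem_map φ y (h.to_isIntegral (AddMonoidAlgebra.single m 1))
  rwa [AddMonoidAlgebra.mapRingHom_single, map_one] at this

/-- `flat_of_frobSplit` applied to `genMap` over `𝔽_p`. -/
theorem genMap_charP {τ : Type} [Fintype τ] [AddMonoid.FG M] {Φ : M →+ (τ →₀ ℕ)} (hΦ : IsFullEmb Φ)
    (p : ℕ) [Fact p.Prime] (y : Fin s → AddMonoidAlgebra ℤ M) (c : MvPolynomial (Fin s) (ZMod p))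
    (hc : genMap (ZMod p) y c ≠ 0)
    (h : letI := (genMap (ZMod p) y).toRingHom.toAlgebra; KillsRel (MvPolynomial (Fin s) (ZMod p))
      (AddMonoidAlgebra (ZMod p) M) c) : (genMap (ZMod p) y).toRingHom.Flat := by
  let := (genMap (ZMod p) y).toRingHom.toAlgebra
  have : CharP (AddMonoidAlgebra (ZMod p) M) p := charP_of_injective_ringHom
    (R := ZMod p) (f := (algebraMap (ZMod p) (AddMonoidAlgebra (ZMod p) M)))
    (by
      have := isDomain_of_full (ZMod p) hΦ
      exact RingHom.injective _) p
  exact flat_of_frobSplit p (frobSplit_mvPolynomial (Fin s) p) (frobSplit_mvPolynomial τ p)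
    (monEmb (ZMod p) Φ) (monRetr (ZMod p) hΦ) (monRetr_mul _ hΦ) (monRetr_one _ hΦ) c
    (fun h0 => hc (monEmb_injective _ hΦ (by rw [map_zero]; exact h0))) h

/-- Noether normalization over `𝔽_p`, with the parameters lifted to `ℤ[M]`, is finite and flat. -/
theorem exists_genMap_charP {τ : Type} [Fintype τ] [AddMonoid.FG M] {Φ : M →+ (τ →₀ ℕ)}
    (hΦ : IsFullEmb Φ) (p : ℕ) [Fact p.Prime] :
    ∃ (s : ℕ) (y : Fin s → AddMonoidAlgebra ℤ M),
      (genMap (ZMod p) y).toRingHom.Finite ∧ (genMap (ZMod p) y).toRingHom.Flat := by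
  have := isDomain_of_full (ZMod p) hΦ
  obtain ⟨s, g, hg, hfin⟩ := exists_finite_inj_algHom_of_fg (ZMod p) (AddMonoidAlgebra (ZMod p) M)
  have hsurj : Function.Surjective (AddMonoidAlgebra.mapRingHom M (Int.castRingHom (ZMod p))) :=
    AddMonoidAlgebra.map_surjective (Int.castRingHom (ZMod p)).toAddMonoidHom
      ZMod.intCast_surjective
  choose y hy using fun i => hsurj (g (X i))
  have hgy : genMap (ZMod p) y = g := MvPolynomial.algHom_ext fun i => by simp [genMap, hy]
  rw [← hgy] at hg hfin
  refine ⟨s, y, hfin, ?_⟩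
  let := (genMap (ZMod p) y).toRingHom.toAlgebra
  have : Module.Finite (MvPolynomial (Fin s) (ZMod p)) (AddMonoidAlgebra (ZMod p) M) := hfin
  obtain ⟨c, hc, h⟩ := KillsRel.exists_ne_zero (MvPolynomial (Fin s) (ZMod p))
    (AddMonoidAlgebra (ZMod p) M)
  exact genMap_charP hΦ p y c (fun h0 => hc (hg (by rw [h0, map_zero]))) h
end

end

/-! ### Integral models of a normalization over `ℚ` -/

section
open TensorProduct

section
variable {M : Type} [AddCommMonoid M] {s : ℕ}

theorem exists_int_multiple (r : AddMonoidAlgebra ℚ M) :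
    ∃ N : ℤ, N ≠ 0 ∧ ∃ y : AddMonoidAlgebra ℤ M,
      AddMonoidAlgebra.mapRingHom M (Int.castRingHom ℚ) y = N • r := by
  induction r using AddMonoidAlgebra.induction_linear with
  | zero => exact ⟨1, one_ne_zero, 0, by simp⟩
  | add a b ha hb =>
    obtain ⟨N, hN, y, hy⟩ := ha
    obtain ⟨N', hN', y', hy'⟩ := hb
    refine ⟨N * N', mul_ne_zero hN hN', N' • y + N • y', ?_⟩
    rw [map_add, map_zsmul, map_zsmul, hy, hy', smul_add, smul_smul, smul_smul, mul_comm N' N]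
  | single m a =>
    refine ⟨a.den, by exact_mod_cast a.den_nz, AddMonoidAlgebra.single m a.num, ?_⟩
    rw [AddMonoidAlgebra.mapRingHom_single, AddMonoidAlgebra.smul_single]
    congr 1
    simp [mul_comm, Rat.mul_den_eq_num]

/-- Noether normalization over `ℚ`, with the parameters scaled into `ℤ[M]`. -/
theorem exists_genMap_rat [AddMonoid.FG M] [Nontrivial (AddMonoidAlgebra ℚ M)] :
    ∃ (s : ℕ) (y : Fin s → AddMonoidAlgebra ℤ M),
      Function.Injective (genMap ℚ y) ∧ (genMap ℚ y).toRingHom.Finite := by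
  obtain ⟨s, g, hg, hfin⟩ := exists_finite_inj_algHom_of_fg ℚ (AddMonoidAlgebra ℚ M)
  choose N hN y hy using fun i => exists_int_multiple (g (X i))
  let σ : MvPolynomial (Fin s) ℚ ≃ₐ[ℚ] MvPolynomial (Fin s) ℚ :=
    AlgEquiv.ofAlgHom (aeval fun i => C (N i : ℚ) * X i) (aeval fun i => C (N i : ℚ)⁻¹ * X i)
      (MvPolynomial.algHom_ext fun i => by
        have : (N i : ℚ) ≠ 0 := by exact_mod_cast hN i
        rw [AlgHom.comp_apply, aeval_X, map_mul, aeval_X, ← algebraMap_eq, AlgHom.commutes,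
          algebraMap_eq, ← mul_assoc, ← C_mul, inv_mul_cancel₀ this, C_1, one_mul, AlgHom.id_apply])
      (MvPolynomial.algHom_ext fun i => by
        have : (N i : ℚ) ≠ 0 := by exact_mod_cast hN i
        rw [AlgHom.comp_apply, aeval_X, map_mul, aeval_X, ← algebraMap_eq, AlgHom.commutes,
          algebraMap_eq, ← mul_assoc, ← C_mul, mul_inv_cancel₀ this, C_1, one_mul, AlgHom.id_apply])
  have h : genMap ℚ y = g.comp σ.toAlgHom := by
    refine MvPolynomial.algHom_ext fun i => ?_
    have h1 : σ (X i) = C (N i : ℚ) * X i := aeval_X _ _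
    change _ = g (σ (X i))
    rw [h1, genMap, aeval_X, hy, map_mul, ← algebraMap_eq, AlgHom.commutes, zsmul_eq_mul]
    simp
  refine ⟨s, y, ?_, ?_⟩
  · rw [h]; exact hg.comp σ.injective
  · rw [h]; exact RingHom.Finite.comp hfin (RingHom.Finite.of_surjective _ σ.surjective)

/-- Clearing denominators in an equation of integral dependence over `ℚ[X_1, …, X_s]`. -/
theorem exists_int_isIntegralElem (y : Fin s → AddMonoidAlgebra ℤ M) (m : M)
    (h : (genMap ℚ y).toRingHom.IsIntegralElem (AddMonoidAlgebra.single m 1)) :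
    ∃ N : ℤ, N ≠ 0 ∧ (genMap ℤ y).toRingHom.IsIntegralElem (AddMonoidAlgebra.single m N) := by
  let : Algebra (MvPolynomial (Fin s) ℤ) (MvPolynomial (Fin s) ℚ) := algebraMvPolynomial
  let := (genMap ℚ y).toRingHom.toAlgebra
  let := ((genMap ℚ y).toRingHom.comp (map (Int.castRingHom ℚ))).toAlgebra
  have : IsScalarTower (MvPolynomial (Fin s) ℤ) (MvPolynomial (Fin s) ℚ) (AddMonoidAlgebra ℚ M) :=
    IsScalarTower.of_algebraMap_eq fun _ => rfl
  obtain ⟨⟨_, N, hN, rfl⟩, P, hP, h0⟩ := IsIntegral.exists_multiple_integral_of_isLocalization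
    ((nonZeroDivisors ℤ).map (C (σ := Fin s))) (Rₘ := MvPolynomial (Fin s) ℚ)
    (AddMonoidAlgebra.single m (1 : ℚ)) h
  refine ⟨N, nonZeroDivisors.ne_zero hN, P, hP, ?_⟩
  have hinj : Function.Injective (AddMonoidAlgebra.mapRingHom M (Int.castRingHom ℚ)) :=
    AddMonoidAlgebra.map_injective (Int.castRingHom ℚ).toAddMonoidHom Int.cast_injective
  have hcomp : (AddMonoidAlgebra.mapRingHom M (Int.castRingHom ℚ)).comp (genMap ℤ y).toRingHom =
      (genMap ℚ y).toRingHom.comp (map (Int.castRingHom ℚ)) :=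
    RingHom.ext fun f => genMap_map (Int.castRingHom ℚ) y f
  apply hinj
  rw [map_zero, Polynomial.hom_eval₂, hcomp, ← h0]
  congr 1
  change _ = ((genMap ℚ y).toRingHom.comp (map (Int.castRingHom ℚ))) (C N) *
    AddMonoidAlgebra.single m 1
  rw [AddMonoidAlgebra.mapRingHom_single]
  simp only [genMap, AlgHom.toRingHom_eq_coe, eq_intCast, map_intCast]
  rw [← zsmul_eq_mul, AddMonoidAlgebra.smul_single]
  simp

/-- The generators of `M` are integral over `D[y]` as soon as a certain integer is invertible. -/
theorem exists_int_finite [AddMonoid.FG M] (y : Fin s → AddMonoidAlgebra ℤ M)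
    (h : (genMap ℚ y).toRingHom.Finite) :
    ∃ N : ℤ, N ≠ 0 ∧ ∀ (D : Type) [CommRing D], IsUnit (N : D) → (genMap D y).toRingHom.Finite := by
  obtain ⟨T, hT⟩ := AddMonoid.FG.fg_top (M := M)
  choose N hN hNi using fun m => exists_int_isIntegralElem y m (h.to_isIntegral _)
  refine ⟨∏ m ∈ T, N m, Finset.prod_ne_zero_iff.mpr fun m _ => hN m, fun D _ hu => ?_⟩
  refine genMap_finite y T hT fun m hm => ?_
  have hu' : IsUnit ((N m : ℤ) : D) :=
    isUnit_of_dvd_unit ((Int.castRingHom D).map_dvd (Finset.dvd_prod_of_mem N hm)) hu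
  obtain ⟨u, hu'⟩ := hu'
  have h1 := genMap_isIntegralElem_map (Int.castRingHom D) y (hNi m)
  have h2 : (genMap D y).toRingHom.IsIntegralElem ((genMap D y).toRingHom (C (u⁻¹ : Dˣ))) :=
    RingHom.isIntegralElem_map _
  have h3 := RingHom.IsIntegralElem.mul _ h2 h1
  have h4 : (AddMonoidAlgebra.single m 1 : AddMonoidAlgebra D M) =
      (genMap D y).toRingHom (C (u⁻¹ : Dˣ)) *
        AddMonoidAlgebra.mapRingHom M (Int.castRingHom D) (AddMonoidAlgebra.single m (N m)) := by
    rw [AddMonoidAlgebra.mapRingHom_single]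
    simp [genMap, AddMonoidAlgebra.single_mul_single, ← hu']
  rw [h4]
  exact h3

end

end

/-! ### Reduction modulo `p` -/

section
open TensorProduct

section

/-- The kernel of a map `ℤ[1/N] → 𝔽_p` is generated by `p`. -/
theorem away_ker {N : ℤ} {D : Type} [CommRing D] [Algebra ℤ D] [IsLocalization.Away N D] {p : ℕ}
    [Fact p.Prime] (φ : D →+* ZMod p) (x : D) (hx : φ x = 0) : ∃ x', x = p * x' := by
  obtain ⟨a, b, rfl⟩ := IsLocalization.exists_mk'_eq (Submonoid.powers N) x
  have h1 : ((a : ℤ) : ZMod p) = 0 := by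
    have := congrArg φ (IsLocalization.mk'_spec D a b)
    rw [map_mul, hx, zero_mul] at this
    simpa using this.symm
  obtain ⟨a', rfl⟩ := (ZMod.intCast_zmod_eq_zero_iff_dvd a p).mp h1
  refine ⟨IsLocalization.mk' D a' b, ?_⟩
  rw [← IsLocalization.mul_mk'_eq_mk'_of_mul]
  simp

variable {M : Type} [AddCommMonoid M] {s : ℕ}

/-- If `π` generates the kernel of `φ`, it generates the kernel of the induced map of monoid algebras. -/
theorem algebra_ker {D E : Type} [CommRing D] [CommRing E] (φ : D →+* E) (π : D)
    (h : ∀ x, φ x = 0 → ∃ x', x = π * x') (r : AddMonoidAlgebra D M)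
    (hr : AddMonoidAlgebra.mapRingHom M φ r = 0) : ∃ r', r = π • r' := by
  classical
  have h' : ∀ m, ∃ x', r.coeff m = π * x' := fun m => h _ (by
    have := congrArg (fun u : AddMonoidAlgebra E M => u.coeff m) hr
    simpa using this)
  choose g hg using h'
  refine ⟨∑ m ∈ r.coeff.support, AddMonoidAlgebra.single m (g m), ?_⟩
  rw [Finset.smul_sum]
  conv_lhs => rw [← AddMonoidAlgebra.sum_coeff_single r]
  refine Finset.sum_congr rfl fun m _ => ?_
  rw [AddMonoidAlgebra.smul_single, smul_eq_mul, ← hg]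

theorem mvPolynomial_ker {σ D E : Type} [CommRing D] [CommRing E] (φ : D →+* E) (π : D)
    (h : ∀ x, φ x = 0 → ∃ x', x = π * x') (f : MvPolynomial σ D)
    (hf : map φ f = 0) : ∃ f', f = C π * f' := by
  refine (C_dvd_iff_dvd_coeff π f).mpr fun i => ?_
  have := congrArg (coeff i) hf
  rw [coeff_map, coeff_zero] at this
  exact h _ this

theorem isJacobsonRing_int : IsJacobsonRing ℤ := by
  refine isJacobsonRing_iff_prime_eq.mpr fun P hP => ?_
  by_cases h : P = ⊥
  · subst h
    refine le_antisymm (fun x hx => ?_) Ideal.le_jacobson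
    have h1 := Ideal.mem_jacobson_bot.mp hx (2 * x)
    rw [Ideal.mem_bot]
    rcases Int.isUnit_iff.mp h1 with h2 | h2 <;> nlinarith [sq_nonneg x]
  · have := hP.isMaximal h
    exact Ideal.jacobson_eq_self_of_isMaximal

/-- Closed points of a finitely generated `ℤ[1/N]`-algebra have positive residue characteristic. -/
theorem exists_prime_mem (N : ℤ) (A : Type) [CommRing A] (hft : (Int.castRingHom A).FiniteType)
    (hN : IsUnit (N : A)) (P : Ideal A) (hP : P.IsMaximal) :
    ∃ p : ℕ, p.Prime ∧ (p : A) ∈ P ∧ ¬ ((p : ℤ) ∣ N) := by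
  let := Ideal.Quotient.field P
  have := isJacobsonRing_int
  have : Algebra.FiniteType ℤ A := RingHom.finiteType_algebraMap.mp hft
  have : Module.Finite ℤ (A ⧸ P) := finite_of_finite_type_of_isJacobsonRing ℤ (A ⧸ P)
  obtain ⟨p, hp⟩ := CharP.exists (A ⧸ P)
  have hp0 : p ≠ 0 := by
    rintro rfl
    have := CharP.charP_to_charZero (A ⧸ P)
    have : Algebra.IsIntegral ℤ (A ⧸ P) := inferInstance
    exact Int.not_isField (isField_of_isIntegral_of_isField (R := ℤ) (S := A ⧸ P)
      (RingHom.injective_int _) (Field.toIsField _))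
  have hpp : p.Prime := (CharP.char_is_prime_or_zero (A ⧸ P) p).resolve_right hp0
  have hmem : (p : A) ∈ P := by
    rw [← Ideal.Quotient.eq_zero_iff_mem, map_natCast, CharP.cast_eq_zero]
  refine ⟨p, hpp, hmem, fun ⟨b, hb⟩ => hP.ne_top (P.eq_top_of_isUnit_mem ?_ hN)⟩
  rw [hb]
  push_cast
  exact P.mul_mem_right _ hmem

end

end

/-! ### Monoid algebras of full submonoids are finite and flat over polynomial rings -/

section
variable {M τ : Type} [AddCommMonoid M] {s : ℕ} [Fintype τ] [AddMonoid.FG M] {Φ : M →+ (τ →₀ ℕ)}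

/-- For all but finitely many primes the reduction of `genMap` modulo `p` is flat: an element `c`
killing the relations over `ℤ[1/N]` stays nonzero modulo `p`. -/
theorem exists_forall_prime_flat (hΦ : IsFullEmb Φ) (y : Fin s → AddMonoidAlgebra ℤ M)
    (hinj : Function.Injective (genMap ℚ y)) (N : ℤ) (hN : N ≠ 0)
    (D : Type) [CommRing D] [Algebra ℤ D] [IsLocalization.Away N D]
    (hfin : ∀ (D : Type) [CommRing D], IsUnit (N : D) → (genMap D y).toRingHom.Finite) :
    ∃ N' : ℤ, N' ≠ 0 ∧ ∀ (p : ℕ) [Fact p.Prime], ¬ ((p : ℤ) ∣ N * N') →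
      (genMap (ZMod p) y).toRingHom.Flat := by
  have hle : Submonoid.powers N ≤ nonZeroDivisors ℤ := powers_le_nonZeroDivisors_of_noZeroDivisors hN
  have : IsDomain D := IsLocalization.isDomain_of_le_nonZeroDivisors (M := Submonoid.powers N) D hle
  have hND : IsUnit (N : D) := by
    simpa using IsLocalization.Away.algebraMap_isUnit (S := D) N
  have hDinj : Function.Injective (algebraMap ℤ D) := IsLocalization.injective D hle
  have hNQ : IsUnit (Int.castRingHom ℚ N) := by simpa using hN
  let φ : D →+* ℚ := IsLocalization.Away.lift N hNQ
  have hφ : Function.Injective φ := by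
    refine (IsLocalization.lift_injective_iff (M := Submonoid.powers N) _).mpr fun a b => ?_
    rw [hDinj.eq_iff]
    simp
  have hDg : Function.Injective (genMap D y) := by
    refine (injective_iff_map_eq_zero _).mpr fun f hf => ?_
    have := genMap_map φ y f
    rw [hf, map_zero, eq_comm, map_eq_zero_iff _ hinj] at this
    exact (map_eq_zero_iff _ (map_injective φ hφ)).mp this
  let _ := (genMap D y).toRingHom.toAlgebra
  have : Module.Finite (MvPolynomial (Fin s) D) (AddMonoidAlgebra D M) := hfin D hND
  obtain ⟨c, hc0, hc⟩ := KillsRel.exists_ne_zero (MvPolynomial (Fin s) D) (AddMonoidAlgebra D M)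
  have hcy : genMap D y c ≠ 0 := fun h => hc0 (hDg (by rw [h, map_zero]))
  obtain ⟨m, hm⟩ : ∃ m, (genMap D y c).coeff m ≠ 0 := by
    by_contra! h
    exact hcy (by ext m; simpa using h m)
  obtain ⟨N', b, hb⟩ := IsLocalization.exists_mk'_eq (Submonoid.powers N) ((genMap D y c).coeff m)
  have hspec := IsLocalization.mk'_spec D N' b
  rw [hb] at hspec
  refine ⟨N', ?_, fun p hp hpN => ?_⟩
  · rintro rfl
    rw [map_zero] at hspec
    rcases mul_eq_zero.mp hspec with h | h
    · exact hm h
    · exact IsLocalization.to_map_ne_zero_of_mem_nonZeroDivisors D hle (hle b.2) h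
  · have hpN1 : ((N : ℤ) : ZMod p) ≠ 0 := fun h =>
      hpN (((ZMod.intCast_zmod_eq_zero_iff_dvd N p).mp h).mul_right _)
    have hpN2 : ((N' : ℤ) : ZMod p) ≠ 0 := fun h =>
      hpN (((ZMod.intCast_zmod_eq_zero_iff_dvd N' p).mp h).mul_left _)
    have hNp : IsUnit (Int.castRingHom (ZMod p) N) := by simpa using hpN1
    let θ : D →+* ZMod p := IsLocalization.Away.lift N hNp
    have hθ : Function.Surjective θ := ZMod.ringHom_surjective θ
    have hker : ∀ x, θ x = 0 → ∃ x', x = (p : D) * x' := away_ker (N := N) θ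
    refine genMap_charP hΦ p y (map θ c) ?_ ?_
    · rw [← genMap_map]
      intro h
      have h1 := congrArg (fun u : AddMonoidAlgebra (ZMod p) M => u.coeff m) h
      have h2 : θ ((genMap D y c).coeff m) = 0 := by simpa using h1
      have h3 := congrArg θ hspec
      rw [map_mul, h2, zero_mul] at h3
      apply hpN2
      simpa using h3.symm
    · let _ := (genMap (ZMod p) y).toRingHom.toAlgebra
      exact KillsRel.quotient (map θ) (AddMonoidAlgebra.mapRingHom M θ) (map_surjective θ hθ)
        (AddMonoidAlgebra.map_surjective θ.toAddMonoidHom hθ) (fun a => genMap_map θ y a)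
        (C (p : D)) (by simp) (fun r hr => by
          obtain ⟨r', h⟩ := algebra_ker θ _ hker r hr
          refine ⟨r', ?_⟩
          rw [h, Algebra.smul_def, Algebra.smul_def, RingHom.algebraMap_toAlgebra]
          simp) hc

/-- Over `ℤ[1/N]`, flatness of `genMap` follows from flatness modulo all primes not dividing `N`:
every maximal ideal contains such a prime, which is a nonzerodivisor on `D[M]`. -/
theorem flat_away (hΦ : IsFullEmb Φ) (y : Fin s → AddMonoidAlgebra ℤ M) (N : ℤ) (hN : N ≠ 0)
    (D : Type) [CommRing D] [Algebra ℤ D] [IsLocalization.Away N D]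
    (hfin : (genMap D y).toRingHom.Finite)
    (hp : ∀ (p : ℕ) [Fact p.Prime], ¬ ((p : ℤ) ∣ N) → (genMap (ZMod p) y).toRingHom.Flat) :
    (genMap D y).toRingHom.Flat := by
  have hle : Submonoid.powers N ≤ nonZeroDivisors ℤ := powers_le_nonZeroDivisors_of_noZeroDivisors hN
  have : IsDomain D := IsLocalization.isDomain_of_le_nonZeroDivisors (M := Submonoid.powers N) D hle
  have hND : IsUnit (N : D) := by
    simpa using IsLocalization.Away.algebraMap_isUnit (S := D) N
  have hDinj : Function.Injective (algebraMap ℤ D) := IsLocalization.injective D hle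
  have : IsNoetherianRing D := IsLocalization.isNoetherianRing (Submonoid.powers N) D inferInstance
  have := isDomain_of_full D hΦ
  let A := MvPolynomial (Fin s) D
  let R := AddMonoidAlgebra D M
  have : CharZero D := ⟨fun a b h => by
    have := @hDinj (a : ℤ) (b : ℤ) (by simpa using h)
    exact_mod_cast this⟩
  have : CharZero R := by
    have hi : Function.Injective (AddMonoidAlgebra.singleZeroRingHom : D →+* R) :=
      AddMonoidAlgebra.single_right_injective
    exact charZero_of_injective_ringHom hi
  have : Algebra.FiniteType ℤ D := IsLocalization.finiteType_of_monoid_fg (Submonoid.powers N) D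
  have hft : (Int.castRingHom A).FiniteType := by
    have h : ((algebraMap D A).comp (algebraMap ℤ D)).FiniteType :=
      RingHom.FiniteType.comp (RingHom.finiteType_algebraMap.mpr inferInstance)
        (RingHom.finiteType_algebraMap.mpr inferInstance)
    rwa [RingHom.ext_int (Int.castRingHom A) _]
  let _ := (genMap D y).toRingHom.toAlgebra
  have : Module.Finite A R := hfin
  refine flat_of_flat_surjective fun P hP => ?_
  obtain ⟨p, hpp, hpP, hpN⟩ := exists_prime_mem N A hft (by simpa only [map_intCast] using hND.map (C : D →+* A)) P hP
  have : Fact p.Prime := ⟨hpp⟩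
  have hpN1 : ((N : ℤ) : ZMod p) ≠ 0 := fun h => hpN ((ZMod.intCast_zmod_eq_zero_iff_dvd N p).mp h)
  have hNp : IsUnit (Int.castRingHom (ZMod p) N) := by simpa using hpN1
  let θ : D →+* ZMod p := IsLocalization.Away.lift N hNp
  have hθ : Function.Surjective θ := ZMod.ringHom_surjective θ
  have hker : ∀ x, θ x = 0 → ∃ x', x = (p : D) * x' := away_ker (N := N) θ
  have hsm : ∀ r : R, (p : A) • r = (p : R) * r := fun r => by
    rw [Algebra.smul_def, map_natCast]
  refine ⟨p, hpP, fun r hr => ?_, MvPolynomial (Fin s) (ZMod p), AddMonoidAlgebra (ZMod p) M,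
    inferInstance, inferInstance, (genMap (ZMod p) y).toRingHom.toAlgebra, map θ,
    AddMonoidAlgebra.mapRingHom M θ, map_surjective θ hθ,
    AddMonoidAlgebra.map_surjective θ.toAddMonoidHom hθ, fun a => genMap_map θ y a, ?_, ?_, hp p hpN⟩
  · rw [hsm] at hr
    exact (mul_eq_zero.mp hr).resolve_left (by exact_mod_cast hpp.ne_zero)
  · intro a
    constructor
    · intro h
      obtain ⟨f', h'⟩ := mvPolynomial_ker θ _ hker a h
      exact ⟨f', by simpa using h'⟩
    · rintro ⟨a', rfl⟩
      rw [map_mul, map_natCast, CharP.cast_eq_zero, zero_mul]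
  · intro r
    constructor
    · intro h
      obtain ⟨r', h'⟩ := algebra_ker θ _ hker r h
      refine ⟨r', ?_⟩
      rw [hsm, h', Nat.cast_smul_eq_nsmul, nsmul_eq_mul]
    · rintro ⟨r', rfl⟩
      rw [hsm, map_mul, map_natCast]
      have : ((p : ℕ) : AddMonoidAlgebra (ZMod p) M) = 0 := by
        rw [← map_natCast (algebraMap (ZMod p) _), CharP.cast_eq_zero, map_zero]
      rw [this, zero_mul]

/-- Over every field `K`, the algebra `K[M]` is finite and flat over a polynomial ring. -/
theorem exists_genMap_finite_flat (hΦ : IsFullEmb Φ) (K : Type) [Field K] :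
    ∃ (s : ℕ) (y : Fin s → AddMonoidAlgebra ℤ M),
      (genMap K y).toRingHom.Finite ∧ (genMap K y).toRingHom.Flat := by
  obtain ⟨p, hp⟩ := CharP.exists K
  rcases CharP.char_is_prime_or_zero K p with hpp | rfl
  · have : Fact p.Prime := ⟨hpp⟩
    let _ := ZMod.algebra K p
    obtain ⟨s, y, h1, h2⟩ := exists_genMap_charP hΦ p
    exact ⟨s, y, genMap_finite_map (algebraMap (ZMod p) K) y h1,
      genMap_flat_baseChange (ZMod p) K y h2⟩
  · have := CharP.charP_to_charZero K
    have := isDomain_of_full ℚ hΦ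
    obtain ⟨s, y, hinj, hfin⟩ := exists_genMap_rat (M := M)
    obtain ⟨N, hN, hNfin⟩ := exists_int_finite y hfin
    obtain ⟨N', hN', hflat⟩ := exists_forall_prime_flat hΦ y hinj N hN (Localization.Away N) hNfin
    have hu : IsUnit (((N * N' : ℤ)) : Localization.Away (N * N')) := by
      simpa using IsLocalization.Away.algebraMap_isUnit (S := Localization.Away (N * N')) (N * N')
    have h := flat_away hΦ y (N * N') (mul_ne_zero hN hN')
      (Localization.Away (N * N')) (hNfin _ (by push_cast at hu; exact isUnit_of_mul_isUnit_left hu)) hflat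
    have huK : IsUnit (Int.castRingHom K (N * N')) := by simp [hN, hN']
    let _ := (IsLocalization.Away.lift (S := Localization.Away (N * N')) (N * N') huK).toAlgebra
    exact ⟨s, y, hNfin K (by simpa using hN), genMap_flat_baseChange (Localization.Away (N * N')) K y h⟩

end

/-! ### Finite flat extensions of polynomial rings are Cohen–Macaulay -/

section
open RingTheory.Sequence

/-- A monic polynomial is regular modulo any ideal extended from the coefficient ring. -/
theorem isSMulRegular_quotient_map_C {C : Type} [CommRing C] (I : Ideal C) (f : Polynomial C)
    (hf : f.Monic) :
    IsSMulRegular (Polynomial C ⧸ (I.map Polynomial.C • ⊤ : Submodule (Polynomial C) (Polynomial C)))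
      f := by
  refine (isSMulRegular_quotient_iff_mem_of_smul_mem _ _).mpr fun g hg => ?_
  rw [smul_eq_mul, Ideal.mul_top] at hg ⊢
  have hk : ∀ h : Polynomial C, h ∈ I.map Polynomial.C ↔ h.map (Ideal.Quotient.mk I) = 0 := by
    intro h
    rw [Ideal.mem_map_C_iff, Polynomial.ext_iff]
    simp [Ideal.Quotient.eq_zero_iff_mem]
  rw [hk] at hg ⊢
  rw [smul_eq_mul, Polynomial.map_mul] at hg
  exact (hf.map (Ideal.Quotient.mk I)).mul_right_eq_zero_iff.mp hg

/-- Monic polynomials in the separate variables form a weakly regular sequence. -/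
theorem exists_isWeaklyRegular (K : Type) [Field K] (s : ℕ) (q : Ideal (MvPolynomial (Fin s) K))
    (h : ∀ i, ∃ f : Polynomial K, f.Monic ∧ Polynomial.aeval (X i : MvPolynomial (Fin s) K) f ∈ q) :
    ∃ rs : List (MvPolynomial (Fin s) K), rs.length = s ∧ (∀ x ∈ rs, x ∈ q) ∧
      IsWeaklyRegular (MvPolynomial (Fin s) K) rs := by
  induction s with
  | zero => exact ⟨[], rfl, by simp, IsWeaklyRegular.nil _ _⟩
  | succ s ih =>
    let B := MvPolynomial (Fin s) K
    let e : MvPolynomial (Fin (s + 1)) K ≃ₐ[K] Polynomial B := finSuccEquiv K s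
    have heX : ∀ i : Fin s, e.symm (Polynomial.C (X i)) = X i.succ := fun i => by
      rw [AlgEquiv.symm_apply_eq, finSuccEquiv_X_succ]
    have heX0 : e.symm Polynomial.X = X 0 := by
      rw [AlgEquiv.symm_apply_eq, finSuccEquiv_X_zero]
    let g : B →ₐ[K] MvPolynomial (Fin (s + 1)) K :=
      e.symm.toAlgHom.comp (Algebra.ofId B (Polynomial B) |>.restrictScalars K)
    have hg : ∀ b, g b = e.symm (Polynomial.C b) := fun _ => rfl
    obtain ⟨rs, hlen, hmem, hreg⟩ := ih (q.comap g) fun i => by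
      obtain ⟨f, hf, hfq⟩ := h i.succ
      refine ⟨f, hf, ?_⟩
      rw [Ideal.mem_comap, ← Polynomial.aeval_algHom_apply, hg, heX]
      exact hfq
    obtain ⟨f, hf, hfq⟩ := h 0
    let f' : Polynomial B := f.map (algebraMap K B)
    have hf' : e.symm f' = Polynomial.aeval (X 0) f := by
      have : f' = Polynomial.aeval Polynomial.X f := by
        rw [Polynomial.aeval_def, ← Polynomial.eval₂_C_X (p := f'), Polynomial.eval₂_map]
        rfl
      rw [this, ← AlgEquiv.coe_toAlgHom, ← Polynomial.aeval_algHom_apply]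
      congr 1
      rw [AlgEquiv.coe_toAlgHom, heX0]
    have h1 : IsWeaklyRegular (Polynomial B) (rs.map Polynomial.C ++ [f']) := by
      refine (isWeaklyRegular_append_iff _ _ _).mpr
        ⟨IsWeaklyRegular.of_flat (R := B) (S := Polynomial B) hreg,
          (isWeaklyRegular_singleton_iff _ _).mpr ?_⟩
      rw [← Ideal.map_ofList]
      exact isSMulRegular_quotient_map_C _ _ (hf.map _)
    let _ := e.symm.toRingEquiv.toRingHom.toAlgebra
    have : Module.Flat (Polynomial B) (MvPolynomial (Fin (s + 1)) K) :=
      RingHom.Flat.of_bijective (f := e.symm.toRingEquiv.toRingHom) e.symm.bijective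
    refine ⟨_, ?_, ?_, IsWeaklyRegular.of_flat (S := MvPolynomial (Fin (s + 1)) K) h1⟩
    · simp [hlen]
    · intro x hx
      simp only [List.map_append, List.map_map, List.map_cons, List.map_nil, List.mem_append,
        List.mem_map, List.mem_singleton] at hx
      rcases hx with ⟨b, hb, rfl⟩ | rfl
      · exact hmem b hb
      · change e.symm f' ∈ q
        rw [hf']
        exact hfq

theorem ringKrullDim_le_of_isIntegral {A R : Type} [CommRing A] [CommRing R] [Algebra A R]
    [Algebra.IsIntegral A R] : ringKrullDim R ≤ ringKrullDim A :=
  Order.krullDim_le_of_strictMono (fun P => PrimeSpectrum.comap (algebraMap A R) P)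
    fun _ _ h => Ideal.IsIntegral.comap_lt_comap h

/-- At a maximal ideal `p`, monic polynomials in the separate variables lying in the contraction of
`p` give a regular sequence of length `s`, and the height of `p` is at most `s` by integrality. -/
theorem isCohenMacaulayRing_of_finite_flat {K R : Type} [Field K] [CommRing R] {s : ℕ}
    (f : MvPolynomial (Fin s) K →+* R) (hfin : f.Finite) (hflat : f.Flat) :
    IsCohenMacaulayRing R := by
  intro p hp
  have hpp := hp.isPrime
  let _ := f.toAlgebra
  have : Module.Finite (MvPolynomial (Fin s) K) R := hfin
  have : Module.Flat (MvPolynomial (Fin s) K) R := hflat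
  have : IsNoetherianRing R := IsNoetherianRing.of_finite (MvPolynomial (Fin s) K) R
  let q := p.comap (algebraMap (MvPolynomial (Fin s) K) R)
  have hq : q.IsMaximal := Ideal.isMaximal_comap_of_isIntegral_of_isMaximal p
  have hdim : ringKrullDim (Localization.AtPrime p) ≤ s := by
    rw [IsLocalization.AtPrime.ringKrullDim_eq_height p]
    refine (Ideal.height_le_ringKrullDim_of_ne_top hp.ne_top).trans
      ((ringKrullDim_le_of_isIntegral (A := MvPolynomial (Fin s) K)).trans ?_)
    simp
  have hlen : ∀ rs : List R, (∀ x ∈ rs, x ∈ p) → IsRegular R rs →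
      (rs.length : WithBot ℕ∞) ≤ ringKrullDim (Localization.AtPrime p) := by
    intro rs hmem hreg
    have h1 := IsWeaklyRegular.isRegular_of_isLocalization_of_mem (Localization.AtPrime p) p
      hreg.toIsWeaklyRegular hmem
    have h2 := ringKrullDim_add_length_eq_ringKrullDim_of_isRegular _ h1
    rw [← h2, List.length_map]
    have : Nontrivial (Localization.AtPrime p ⧸
        Ideal.ofList (rs.map (algebraMap R (Localization.AtPrime p)))) := by
      refine Ideal.Quotient.nontrivial_iff.mpr fun h => h1.top_ne_smul ?_
      rw [h, smul_eq_mul, Ideal.mul_top]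
    exact le_add_of_nonneg_left ringKrullDim_nonneg_of_nontrivial
  obtain ⟨rs, hrs, hmem, hreg⟩ := exists_isWeaklyRegular K s q fun i => by
    let := Ideal.Quotient.field q
    have : Module.Finite K (MvPolynomial (Fin s) K ⧸ q) :=
      finite_of_finite_type_of_isJacobsonRing K _
    obtain ⟨g, hg, h0⟩ := Algebra.IsIntegral.isIntegral (R := K)
      (Ideal.Quotient.mk q (X i : MvPolynomial (Fin s) K))
    refine ⟨g, hg, ?_⟩
    rw [← Ideal.Quotient.eq_zero_iff_mem, ← Ideal.Quotient.mkₐ_eq_mk K,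
      ← Polynomial.aeval_algHom_apply]
    exact h0
  have hS : ∃ rs : List R, rs.length = s ∧ (∀ x ∈ rs, x ∈ p) ∧ IsRegular R rs := by
    have hmem' : ∀ x ∈ rs.map (algebraMap (MvPolynomial (Fin s) K) R), x ∈ p := by
      intro x hx
      obtain ⟨a, ha, rfl⟩ := List.mem_map.mp hx
      exact hmem a ha
    refine ⟨_, by rw [List.length_map, hrs], hmem', hreg.of_flat (S := R), fun h => ?_⟩
    rw [smul_eq_mul, Ideal.mul_top] at h
    exact hp.ne_top (top_le_iff.mp (h.le.trans (Ideal.span_le.mpr hmem')))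
  have hb : ∀ k ∈ {k | ∃ rs : List R, rs.length = k ∧ (∀ x ∈ rs, x ∈ p) ∧ IsRegular R rs},
      (k : WithBot ℕ∞) ≤ ringKrullDim (Localization.AtPrime p) := by
    rintro k ⟨rs, rfl, h1, h2⟩
    exact hlen rs h1 h2
  have hb' : ∀ k ∈ {k | ∃ rs : List R, rs.length = k ∧ (∀ x ∈ rs, x ∈ p) ∧ IsRegular R rs},
      k ≤ s := fun k hk => by exact_mod_cast (hb k hk).trans hdim
  have hd : idealDepth R p R = s :=
    le_antisymm (csSup_le ⟨s, hS⟩ hb') (le_csSup ⟨s, hb'⟩ hS)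
  rw [hd]
  exact le_antisymm (hb s hS) hdim

end

/-! ### The Rees algebra as a monoid algebra -/

section
variable {n d : ℕ} {V : Fin d → Finset (Fin n)} {t : ℕ → ℕ}

/-- A vertex set meeting every edge. -/
def IsTransversal (V : Fin d → Finset (Fin n)) (t : ℕ → ℕ) (C : Finset (Fin n)) : Prop :=
  ∀ e, IsSpreadEdge n d V t e → ∃ j, e j ∈ C

theorem IsSpreadEdge.inf {e f : Fin d → Fin n} (he : IsSpreadEdge n d V t e)
    (hf : IsSpreadEdge n d V t f) : IsSpreadEdge n d V t (fun j => min (e j) (f j)) := by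
  refine ⟨fun j => ?_, fun j h => ?_⟩
  · rcases min_choice (e j) (f j) with h | h <;> simp only [h]
    exacts [he.1 j, hf.1 j]
  · have h1 := he.2 j h
    have h2 := hf.2 j h
    simp only [Fin.coe_min]
    omega

/-- Two edges `g`, `h` with `g j ≤ h j` may be spliced at the layer `j`. -/
theorem IsSpreadEdge.splice {g h : Fin d → Fin n} (hg : IsSpreadEdge n d V t g)
    (hh : IsSpreadEdge n d V t h) (j : Fin d) (hj : g j ≤ h j) :
    IsSpreadEdge n d V t (fun k => if k < j then g k else h k) := by
  refine ⟨fun k => ?_, fun k hk => ?_⟩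
  · dsimp only
    split_ifs
    exacts [hg.1 k, hh.1 k]
  · have h1 := hg.2 k hk
    have h2 := hh.2 k hk
    dsimp only
    by_cases hkj : k + 1 < j
    · rw [if_pos (Fin.lt_def.mpr (by simp; omega)), if_pos (Fin.lt_def.mpr hkj)]
      exact h1
    · have hk1 : ¬ (⟨k + 1, hk⟩ : Fin d) < j := fun h => hkj (Fin.lt_def.mp h)
      rw [if_neg hk1]
      by_cases hkj' : k < j
      · have hjk : j = ⟨k + 1, hk⟩ := Fin.ext (by simp; omega)
        rw [if_pos (Fin.lt_def.mpr hkj')]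
        subst hjk
        exact h1.trans hj
      · rw [if_neg (fun h => hkj' (Fin.lt_def.mp h))]
        exact h2

theorem index_eq_of_mem (hV : ∀ i j : Fin d, i < j → ∀ p ∈ V i, ∀ q ∈ V j, (p : ℕ) < (q : ℕ))
    {i j : Fin d} {v : Fin n} (hi : v ∈ V i) (hj : v ∈ V j) : i = j := by
  rcases lt_trichotomy i j with h | h | h
  · exact absurd (hV i j h v hi v hj) (lt_irrefl _)
  · exact h
  · exact absurd (hV j i h v hj v hi) (lt_irrefl _)

/-- The exponent vector of the monomial of an edge. -/
def edgeWt (e : Fin d → Fin n) : Fin n →₀ ℕ := ∑ j, Finsupp.single (e j) 1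

theorem edgeWt_apply (e : Fin d → Fin n) (v : Fin n) :
    edgeWt e v = (Finset.univ.filter fun j => e j = v).card := by
  simp [edgeWt, Finsupp.single_apply]

theorem sum_edgeWt (e : Fin d → Fin n) (C : Finset (Fin n)) :
    ∑ v ∈ C, edgeWt e v = (Finset.univ.filter fun j => e j ∈ C).card := by
  simp only [edgeWt, Finsupp.finsetSum_apply, Finsupp.single_apply]
  rw [Finset.sum_comm]
  simp

/-- The discrete max-flow-min-cut step: if every transversal has `a`-weight at least `k + 1`, an
edge can be split off from `a` so that every transversal keeps weight at least `k`. -/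
theorem exists_edge_sub
    (hV : ∀ i j : Fin d, i < j → ∀ p ∈ V i, ∀ q ∈ V j, (p : ℕ) < (q : ℕ))
    (a : Fin n →₀ ℕ) (k : ℕ) (ha : ∀ C, IsTransversal V t C → k + 1 ≤ ∑ v ∈ C, a v) :
    ∃ (e : Fin d → Fin n) (b : Fin n →₀ ℕ), IsSpreadEdge n d V t e ∧ a = b + edgeWt e ∧
      ∀ C, IsTransversal V t C → k ≤ ∑ v ∈ C, b v := by
  classical
  let P : (Fin d → Fin n) → Prop := fun e => IsSpreadEdge n d V t e ∧ ∀ j, e j ∈ a.support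
  have hP : ∃ e, P e := by
    by_contra! hcon
    have := ha (a.support)ᶜ fun e he => by
      by_contra! h
      exact hcon e ⟨he, fun j => by simpa using h j⟩
    rw [Finset.sum_eq_zero fun v hv => by simpa using hv] at this
    omega
  -- The edges inside the support are closed under minima; `e` is the least one.
  obtain ⟨e, he, hmin⟩ : ∃ e, P e ∧ ∀ f, P f → ∀ j, e j ≤ f j := by
    obtain ⟨e, he, hmin⟩ := (Set.toFinite {e | P e}).exists_minimalFor
      (fun e : Fin d → Fin n => ∑ j, (e j : ℕ)) _ hP
    refine ⟨e, he, fun f hf j => ?_⟩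
    have hef : P (fun j => min (e j) (f j)) := ⟨he.1.inf hf.1, fun j => by
      rcases min_choice (e j) (f j) with h | h <;> simp only [h]
      exacts [he.2 j, hf.2 j]⟩
    by_contra! hlt
    have hsum : ∑ j, ((min (e j) (f j) : Fin n) : ℕ) < ∑ j, (e j : ℕ) :=
      Finset.sum_lt_sum (fun j _ => Fin.le_def.mp (min_le_left _ _))
        ⟨j, Finset.mem_univ _, Fin.lt_def.mp ((min_le_right _ _).trans_lt hlt)⟩
    exact absurd (hmin hef hsum.le) (not_le.mpr hsum)
  have hinj : Function.Injective e := fun i j h =>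
    index_eq_of_mem hV (he.1.1 i) (h ▸ he.1.1 j)
  have hle : edgeWt e ≤ a := fun v => by
    rw [edgeWt_apply]
    by_cases hv : ∃ j, e j = v
    · obtain ⟨j, rfl⟩ := hv
      have h1 : 1 ≤ a (e j) := Nat.one_le_iff_ne_zero.mpr (Finsupp.mem_support_iff.mp (he.2 j))
      refine le_trans ?_ h1
      exact Finset.card_le_one.mpr fun x hx y hy => hinj (by simp_all)
    · rw [Finset.filter_false_of_mem fun j _ h => hv ⟨j, h⟩]
      simp
  refine ⟨e, a - edgeWt e, he.1, (tsub_add_cancel_of_le hle).symm, fun C₀ hC₀ => ?_⟩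
  let Q : Finset (Fin n) → Prop := fun C => ∀ f, P f → ∃ j, f j ∈ C
  obtain ⟨C, hCC₀, hC⟩ := (Set.toFinite {C | Q C}).exists_le_minimal (a := C₀)
    fun f hf => hC₀ f hf.1
  have hcrit : ∀ v ∈ C, ∃ g, P g ∧ (∃ j, g j = v) ∧ ∀ j, g j ∈ C → g j = v := by
    intro v hv
    have hnot : ¬ Q (C.erase v) := fun h =>
      absurd (hC.le_of_le h (Finset.erase_subset v C) hv) (Finset.notMem_erase v C)
    simp only [Q, not_forall, not_exists] at hnot
    obtain ⟨g, hg, hgC⟩ := hnot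
    have hgv : ∀ j, g j ∈ C → g j = v := fun j hj => by
      by_contra h
      exact hgC j (Finset.mem_erase.mpr ⟨h, hj⟩)
    obtain ⟨j, hj⟩ := hC.prop g hg
    exact ⟨g, hg, ⟨j, hgv j hj⟩, hgv⟩
  have hlt : ∀ i j : Fin d, i < j → e i ∈ C → e j ∉ C := by
    intro i j hij hi hj
    obtain ⟨g, hg, ⟨j', hgj⟩, hgC⟩ := hcrit _ hj
    obtain ⟨h, hh, -, hhC⟩ := hcrit _ hi
    obtain rfl : j' = j := index_eq_of_mem hV (hg.1.1 j') (hgj ▸ he.1.1 j)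
    -- Follow `g` strictly before layer `j` and `h` from there on: this edge avoids `C`.
    obtain ⟨l, hl⟩ := hC.prop (fun k => if k < j' then g k else h k)
      ⟨hg.1.splice hh.1 j' (hgj ▸ hmin h hh j'), fun k => by
        dsimp only
        split_ifs
        exacts [hg.2 k, hh.2 k]⟩
    split_ifs at hl with hlj
    · have := index_eq_of_mem hV (hg.1.1 l) (hgC l hl ▸ he.1.1 j')
      exact absurd this hlj.ne
    · have := index_eq_of_mem hV (hh.1.1 l) (hhC l hl ▸ he.1.1 i)
      exact hlj (this ▸ hij)
  have hone : ∑ v ∈ C, edgeWt e v ≤ 1 := by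
    rw [sum_edgeWt]
    refine Finset.card_le_one.mpr fun i hi j hj => ?_
    simp only [Finset.mem_filter, Finset.mem_univ, true_and] at hi hj
    rcases lt_trichotomy i j with h | h | h
    · exact absurd hj (hlt i j h hi)
    · exact h
    · exact absurd hi (hlt j i h hj)
  have hCa : k + 1 ≤ ∑ v ∈ C, a v := by
    have := ha (C ∪ (a.support)ᶜ) fun f hf => by
      by_cases hs : ∀ j, f j ∈ a.support
      · obtain ⟨j, hj⟩ := hC.prop f ⟨hf, hs⟩
        exact ⟨j, Finset.mem_union_left _ hj⟩
      · push Not at hs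
        obtain ⟨j, hj⟩ := hs
        exact ⟨j, Finset.mem_union_right _ (Finset.mem_compl.mpr hj)⟩
    rwa [← Finset.sum_subset Finset.subset_union_left fun v hv hvC => by
      simpa [hvC] using hv] at this
  have hsplit : ∑ v ∈ C, (a - edgeWt e) v + ∑ v ∈ C, edgeWt e v = ∑ v ∈ C, a v := by
    rw [← Finset.sum_add_distrib]
    refine Finset.sum_congr rfl fun v _ => ?_
    rw [← Finsupp.add_apply, tsub_add_cancel_of_le hle]
  have hmono : ∑ v ∈ C, (a - edgeWt e) v ≤ ∑ v ∈ C₀, (a - edgeWt e) v :=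
    Finset.sum_le_sum_of_subset hCC₀
  omega

/-- The monoid of exponents `(a, k)` of the monomials `x ^ a T ^ k` satisfying the
transversal inequalities. -/
def reesMonoid (V : Fin d → Finset (Fin n)) (t : ℕ → ℕ) : AddSubmonoid ((Fin n →₀ ℕ) × ℕ) where
  carrier := {p | ∀ C, IsTransversal V t C → p.2 ≤ ∑ v ∈ C, p.1 v}
  zero_mem' := by simp
  add_mem' {p q} hp hq C hC := by
    simp only [Prod.snd_add, Prod.fst_add, Finsupp.add_apply, Finset.sum_add_distrib]
    exact add_le_add (hp C hC) (hq C hC)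

theorem mem_reesMonoid_zero (a : Fin n →₀ ℕ) : (a, 0) ∈ reesMonoid V t := fun _ _ => Nat.zero_le _

theorem edgeWt_mem_reesMonoid {e : Fin d → Fin n} (he : IsSpreadEdge n d V t e) :
    (edgeWt e, 1) ∈ reesMonoid V t := by
  intro C hC
  obtain ⟨j, hj⟩ := hC e he
  rw [sum_edgeWt]
  exact Finset.card_pos.mpr ⟨j, by simpa using hj⟩

/-- The monoid is generated by the vertices in degree `0` and the edges in degree `1`. -/
theorem reesMonoid_le
    (hV : ∀ i j : Fin d, i < j → ∀ p ∈ V i, ∀ q ∈ V j, (p : ℕ) < (q : ℕ))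
    (N : AddSubmonoid ((Fin n →₀ ℕ) × ℕ)) (h0 : ∀ i, (Finsupp.single i 1, 0) ∈ N)
    (h1 : ∀ e, IsSpreadEdge n d V t e → (edgeWt e, 1) ∈ N) : reesMonoid V t ≤ N := by
  rintro ⟨a, k⟩ h
  induction k generalizing a with
  | zero =>
    clear h
    induction a using Finsupp.induction_linear with
    | zero => exact N.zero_mem
    | add a b ha hb => simpa using N.add_mem ha hb
    | single i c => simpa using N.nsmul_mem (h0 i) c
  | succ k ih =>
    obtain ⟨e, b, he, rfl, hb⟩ := exists_edge_sub hV a k h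
    exact N.add_mem (ih b hb) (h1 e he)

theorem reesMonoid_fg
    (hV : ∀ i j : Fin d, i < j → ∀ p ∈ V i, ∀ q ∈ V j, (p : ℕ) < (q : ℕ)) :
    AddMonoid.FG (reesMonoid V t) := by
  rw [AddMonoid.fg_iff_addSubmonoid_fg, AddSubmonoid.fg_iff]
  refine ⟨Set.range (fun i => (Finsupp.single i 1, 0)) ∪
    (fun e => (edgeWt e, 1)) '' {e | IsSpreadEdge n d V t e}, le_antisymm ?_ ?_,
    (Set.finite_range _).union (Set.toFinite _)⟩
  · rw [AddSubmonoid.closure_le]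
    rintro _ (⟨i, rfl⟩ | ⟨e, he, rfl⟩)
    exacts [mem_reesMonoid_zero _, edgeWt_mem_reesMonoid he]
  · exact reesMonoid_le hV _ (fun i => AddSubmonoid.subset_closure (Or.inl ⟨i, rfl⟩))
      fun e he => AddSubmonoid.subset_closure (Or.inr ⟨e, he, rfl⟩)

/-- The embedding of `reesMonoid` recording the coordinates of `(a, k)` and the slacks
`a(C) - k` of all transversal inequalities. -/
def reesEmb (V : Fin d → Finset (Fin n)) (t : ℕ → ℕ) :
    reesMonoid V t →+ ((Fin n ⊕ Unit) ⊕ {C // IsTransversal V t C} →₀ ℕ) where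
  toFun p := Finsupp.equivFunOnFinite.symm (Sum.elim (Sum.elim p.1.1 fun _ => p.1.2)
    fun C => ∑ v ∈ C.1, p.1.1 v - p.1.2)
  map_zero' := by
    ext ((i | i) | C) <;> simp
  map_add' p q := by
    ext ((i | i) | C)
    · simp
    · simp
    · have h1 := p.2 C.1 C.2
      have h2 := q.2 C.1 C.2
      simp [Finset.sum_add_distrib]
      omega

theorem reesEmb_isFullEmb : IsFullEmb (reesEmb V t) where
  inj p q h := by
    refine Subtype.ext (Prod.ext (Finsupp.ext fun i => ?_) ?_)
    · exact DFunLike.congr_fun h (Sum.inl (Sum.inl i))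
    · exact DFunLike.congr_fun h (Sum.inl (Sum.inr ()))
  full p q w h := by
    have hi : ∀ i, p.1.1 i + w (Sum.inl (Sum.inl i)) = q.1.1 i := fun i =>
      DFunLike.congr_fun h (Sum.inl (Sum.inl i))
    have hk : p.1.2 + w (Sum.inl (Sum.inr ())) = q.1.2 :=
      DFunLike.congr_fun h (Sum.inl (Sum.inr ()))
    have hC : ∀ C : {C // IsTransversal V t C},
        w (Sum.inl (Sum.inr ())) + w (Sum.inr C) = ∑ v ∈ C.1, w (Sum.inl (Sum.inl v)) := by
      intro C
      have h1 : (∑ v ∈ C.1, p.1.1 v - p.1.2) + w (Sum.inr C) = ∑ v ∈ C.1, q.1.1 v - q.1.2 :=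
        DFunLike.congr_fun h (Sum.inr C)
      have h2 := p.2 C.1 C.2
      have h3 := q.2 C.1 C.2
      have h4 : ∑ v ∈ C.1, q.1.1 v = ∑ v ∈ C.1, p.1.1 v + ∑ v ∈ C.1, w (Sum.inl (Sum.inl v)) := by
        rw [← Finset.sum_add_distrib]
        exact Finset.sum_congr rfl fun v _ => (hi v).symm
      omega
    refine ⟨⟨(Finsupp.equivFunOnFinite.symm fun i => w (Sum.inl (Sum.inl i)),
      w (Sum.inl (Sum.inr ()))), fun C hCt => ?_⟩, ?_⟩
    · have := hC ⟨C, hCt⟩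
      simp only [Finsupp.equivFunOnFinite_symm_apply_apply]
      simp only at this
      omega
    · ext ((i | i) | C)
      · rfl
      · rfl
      · change ∑ v ∈ C.1, w (Sum.inl (Sum.inl v)) - w (Sum.inl (Sum.inr ())) = _
        have := hC C
        omega


open Polynomial in
/-- The ring map `K[reesMonoid] → K[x][T]` sending the exponent `(a, k)` to `x ^ a T ^ k`. -/
def reesMap (K : Type) [Field K] (V : Fin d → Finset (Fin n)) (t : ℕ → ℕ) :
    AddMonoidAlgebra K (reesMonoid V t) →ₐ[K] (MvPolynomial (Fin n) K)[X] :=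
  AddMonoidAlgebra.lift K _ _
    { toFun := fun p => Polynomial.monomial p.toAdd.1.2 (MvPolynomial.monomial p.toAdd.1.1 1)
      map_one' := rfl
      map_mul' := fun p q => by
        rw [Polynomial.monomial_mul_monomial, MvPolynomial.monomial_mul, one_mul]
        rfl }

theorem reesMap_single (K : Type) [Field K] (p : reesMonoid V t) (c : K) :
    reesMap K V t (AddMonoidAlgebra.single p c) =
      Polynomial.monomial p.1.2 (MvPolynomial.monomial p.1.1 c) := by
  rw [reesMap, AddMonoidAlgebra.lift_single]
  change c • Polynomial.monomial p.1.2 (MvPolynomial.monomial p.1.1 (1 : K)) = _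
  rw [Polynomial.smul_monomial, MvPolynomial.smul_monomial, smul_eq_mul, mul_one]

/-- The coefficient of `x ^ a T ^ k` recovers that of `(a, k)`; hence `reesMap` is injective. -/
theorem coeff_reesMap (K : Type) [Field K] (f : AddMonoidAlgebra K (reesMonoid V t))
    (p : reesMonoid V t) :
    MvPolynomial.coeff p.1.1 ((reesMap K V t f).coeff p.1.2) = f.coeff p := by
  classical
  induction f using AddMonoidAlgebra.induction_linear with
  | zero => simp
  | add f g hf hg => simp [hf, hg]
  | single q c =>
    rw [reesMap_single, Polynomial.coeff_monomial, AddMonoidAlgebra.coeff_single,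
      Finsupp.single_apply]
    by_cases h : q = p
    · subst h
      simp
    · rw [if_neg h]
      split_ifs with h2
      · rw [MvPolynomial.coeff_monomial, if_neg fun h1 => h (Subtype.ext (Prod.ext h1 h2))]
      · simp

theorem reesMap_injective (K : Type) [Field K] : Function.Injective (reesMap K V t) := by
  intro f g h
  ext p
  rw [← coeff_reesMap, ← coeff_reesMap, h]

theorem prod_X_eq (K : Type) [Field K] (e : Fin d → Fin n) :
    (∏ j, X (e j) : MvPolynomial (Fin n) K) = MvPolynomial.monomial (edgeWt e) 1 := by
  rw [edgeWt, MvPolynomial.monomial_sum_one]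
  rfl

theorem monomial_mem_pow (K : Type) [Field K]
    (hV : ∀ i j : Fin d, i < j → ∀ p ∈ V i, ∀ q ∈ V j, (p : ℕ) < (q : ℕ))
    (a : Fin n →₀ ℕ) (k : ℕ) (h : (a, k) ∈ reesMonoid V t) (c : K) :
    MvPolynomial.monomial a c ∈ edgeIdeal K n d V t ^ k := by
  induction k generalizing a with
  | zero => simp
  | succ k ih =>
    obtain ⟨e, b, he, rfl, hb⟩ := exists_edge_sub hV a k h
    rw [← mul_one c, ← MvPolynomial.monomial_mul, pow_succ]
    exact Ideal.mul_mem_mul (ih b hb) (Ideal.subset_span ⟨e, he, (prod_X_eq K e).symm⟩)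

theorem reesMap_mem (K : Type) [Field K]
    (hV : ∀ i j : Fin d, i < j → ∀ p ∈ V i, ∀ q ∈ V j, (p : ℕ) < (q : ℕ))
    (f : AddMonoidAlgebra K (reesMonoid V t)) :
    reesMap K V t f ∈ reesAlgebra (edgeIdeal K n d V t) := by
  induction f using AddMonoidAlgebra.induction_linear with
  | zero => simp
  | add f g hf hg => rw [map_add]; exact add_mem hf hg
  | single p c =>
    rw [reesMap_single, reesAlgebra.monomial_mem]
    exact monomial_mem_pow K hV _ _ p.2 c

theorem mem_range_reesMap (K : Type) [Field K]
    (f : Polynomial (MvPolynomial (Fin n) K)) (hf : f ∈ reesAlgebra (edgeIdeal K n d V t)) :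
    f ∈ (reesMap K V t).range := by
  have hC : ∀ r, Polynomial.C r ∈ (reesMap K V t).range := by
    intro r
    induction r using MvPolynomial.induction_on' with
    | monomial a c => exact ⟨_, reesMap_single K ⟨(a, 0), mem_reesMonoid_zero a⟩ c⟩
    | add r s hr hs => rw [map_add]; exact add_mem hr hs
  let T : Subalgebra (MvPolynomial (Fin n) K) (Polynomial (MvPolynomial (Fin n) K)) :=
    { (reesMap K V t).range with algebraMap_mem' := hC }
  change f ∈ T
  rw [← adjoin_monomial_eq_reesAlgebra] at hf
  refine Algebra.adjoin_le ?_ hf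
  rintro _ ⟨r, hr, rfl⟩
  change Polynomial.monomial 1 r ∈ T
  induction hr using Submodule.span_induction with
  | mem r hr =>
    obtain ⟨e, he, rfl⟩ := hr
    rw [prod_X_eq]
    exact ⟨_, reesMap_single K ⟨(edgeWt e, 1), edgeWt_mem_reesMonoid he⟩ 1⟩
  | zero => simp
  | add r s _ _ hr hs => rw [map_add]; exact add_mem hr hs
  | smul c r _ hr => rw [map_smul]; exact T.smul_mem hr c

/-- The Rees algebra of the edge ideal is the monoid algebra of `reesMonoid`. -/
def reesEquiv (K : Type) [Field K]
    (hV : ∀ i j : Fin d, i < j → ∀ p ∈ V i, ∀ q ∈ V j, (p : ℕ) < (q : ℕ)) :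
    AddMonoidAlgebra K (reesMonoid V t) ≃+* reesAlgebra (edgeIdeal K n d V t) :=
  RingEquiv.ofBijective
    ((reesMap K V t).toRingHom.codRestrict (reesAlgebra (edgeIdeal K n d V t)) (reesMap_mem K hV))
    ⟨fun _ _ h => reesMap_injective K (congrArg Subtype.val h), fun f =>
      (mem_range_reesMap K f.1 f.2).imp fun _ h => Subtype.ext h⟩

end

/-- **Corollary.**  The Rees algebra `R(I(K_V^𝐭)) = ⊕_{j ≥ 0} I(K_V^𝐭)^j t^j` of the edge
ideal of a complete `𝐭`-spread `d`-partite hypergraph is a normal Cohen–Macaulay domain. -/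
theorem reesAlgebra_normal_CM_domain
    (K : Type) [Field K] (n d : ℕ) (hd : 0 < d)
    (V : Fin d → Finset (Fin n)) (t : ℕ → ℕ)
    (ht : ∀ i, 1 ≤ t i)
    (hV : ∀ i j : Fin d, i < j → ∀ p ∈ V i, ∀ q ∈ V j, (p : ℕ) < (q : ℕ))
    (hne : ∀ j, (V j).Nonempty)
    (hiso : ∀ (j : Fin d), ∀ v ∈ V j, ∃ e, IsSpreadEdge n d V t e ∧ e j = v) :
    IsDomain (reesAlgebra (edgeIdeal K n d V t)) ∧
      IsIntegrallyClosed (reesAlgebra (edgeIdeal K n d V t)) ∧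
      IsCohenMacaulayRing (reesAlgebra (edgeIdeal K n d V t)) := by
  have hΦ := reesEmb_isFullEmb (V := V) (t := t)
  have ε := reesEquiv (t := t) K hV
  have := reesMonoid_fg (t := t) hV
  have := isDomain_of_full K hΦ
  have := isIntegrallyClosed_of_full K hΦ
  have : Fintype ((Fin n ⊕ Unit) ⊕ {C // IsTransversal V t C}) := Fintype.ofFinite _
  obtain ⟨s, y, hfin, hflat⟩ := exists_genMap_finite_flat hΦ K
  refine ⟨ε.symm.injective.isDomain ε.symm.toRingHom, .of_equiv ε,
    isCohenMacaulayRing_of_finite_flat (ε.toRingHom.comp (genMap K y).toRingHom) ?_ ?_⟩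
  · exact (RingHom.Finite.of_surjective _ ε.surjective).comp hfin
  · exact hflat.comp (.of_bijective ε.bijective)

end
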